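/- arXiv:math/0201165 — 5 statements merged into one kernel-verified Lean document; each statement's English description precedes it below -/
import Mathlib

section
/- Let a and b be natural numbers, let A be an invertible a × a complex matrix and B an invertible b × b complex matrix. If trace(A^n) = trace(B^n) for every integer n ≥ 1, then a = b. -/
open Matrix

/-!
Let `p` be the product of the characteristic polynomials of `A` and `B`. By Cayley–Hamilton,
`trace (p(A)) = 0 = trace (p(B))`. Expanding both traces by linearity, the terms of positive degree
agree by hypothesis, so the constant terms `p(0) * a` and `p(0) * b` agree as well, and `p(0)`,
which is `det A * det B` up to sign, can be cancelled.
-/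

section TracePowers

open Polynomial
open scoped nonZeroDivisors

variable {m n : Type*} [Fintype m] [DecidableEq m] [Fintype n] [DecidableEq n]

theorem trace_aeval_eq_sum_range {R : Type*} [CommSemiring R] (A : Matrix m m R) (p : R[X]) :
    (aeval A p).trace = ∑ k ∈ Finset.range (p.natDegree + 1), p.coeff k * (A ^ k).trace := by
  simp only [aeval_eq_sum_range, trace_sum, trace_smul, smul_eq_mul]

variable {R : Type*} [CommRing R]

theorem trace_aeval_sub_trace_aeval {A : Matrix m m R} {B : Matrix n n R} {p : R[X]}
    (h : ∀ k, 1 ≤ k → k ≤ p.natDegree → (A ^ k).trace = (B ^ k).trace) :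
    (aeval A p).trace - (aeval B p).trace =
      p.coeff 0 * ((Fintype.card m : R) - Fintype.card n) := by
  have positive_degree_terms :
      ∑ k ∈ Finset.range p.natDegree, p.coeff (k + 1) * (A ^ (k + 1)).trace =
        ∑ k ∈ Finset.range p.natDegree, p.coeff (k + 1) * (B ^ (k + 1)).trace :=
    Finset.sum_congr rfl fun k hk ↦ by
      rw [h (k + 1) k.succ_pos (Finset.mem_range.1 hk)]
  rw [trace_aeval_eq_sum_range, trace_aeval_eq_sum_range, Finset.sum_range_succ',
    Finset.sum_range_succ', positive_degree_terms, pow_zero, pow_zero, trace_one, trace_one]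
  ring

theorem charpoly_coeff_zero_mem_nonZeroDivisors_iff {A : Matrix m m R} :
    A.charpoly.coeff 0 ∈ R⁰ ↔ A.det ∈ R⁰ := by
  have sign_mem : (-1 : R) ^ Fintype.card m ∈ R⁰ := (isUnit_neg_one.pow _).mem_nonZeroDivisors
  rw [det_eq_sign_charpoly_coeff, mul_mem_nonZeroDivisors, and_iff_right sign_mem]

theorem natDegree_charpoly_mul_charpoly_le (A : Matrix m m R) (B : Matrix n n R) :
    (A.charpoly * B.charpoly).natDegree ≤ Fintype.card m + Fintype.card n := by
  nontriviality R
  simpa only [charpoly_natDegree_eq_dim] using natDegree_mul_le (p := A.charpoly) (q := B.charpoly)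

theorem natCast_card_eq_of_trace_pow_eq {A : Matrix m m R} {B : Matrix n n R}
    (hA : A.det ∈ R⁰) (hB : B.det ∈ R⁰)
    (h : ∀ k, 1 ≤ k → k ≤ Fintype.card m + Fintype.card n → (A ^ k).trace = (B ^ k).trace) :
    (Fintype.card m : R) = Fintype.card n := by
  set p := A.charpoly * B.charpoly
  have aeval_A : aeval A p = 0 := by rw [map_mul, aeval_self_charpoly, zero_mul]
  have aeval_B : aeval B p = 0 := by rw [map_mul, aeval_self_charpoly, mul_zero]
  have coeff_zero_mem : p.coeff 0 ∈ R⁰ := by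
    rw [mul_coeff_zero]
    exact mul_mem (charpoly_coeff_zero_mem_nonZeroDivisors_iff.2 hA)
      (charpoly_coeff_zero_mem_nonZeroDivisors_iff.2 hB)
  have trace_sub := trace_aeval_sub_trace_aeval (p := p) fun k hk hkp ↦
    h k hk (hkp.trans (natDegree_charpoly_mul_charpoly_le A B))
  rw [aeval_A, aeval_B, trace_zero, trace_zero, sub_self] at trace_sub
  exact sub_eq_zero.1 ((mul_left_mem_nonZeroDivisors_eq_zero_iff coeff_zero_mem).1 trace_sub.symm)

theorem stmt_6_general [CharZero R] {A : Matrix m m R} {B : Matrix n n R}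
    (hA : A.det ∈ R⁰) (hB : B.det ∈ R⁰)
    (h : ∀ k, 1 ≤ k → k ≤ Fintype.card m + Fintype.card n → (A ^ k).trace = (B ^ k).trace) :
    Fintype.card m = Fintype.card n :=
  Nat.cast_injective (natCast_card_eq_of_trace_pow_eq hA hB h)

end TracePowers

/-- If `A ∈ GL(a, ℂ)` and `B ∈ GL(b, ℂ)` satisfy `trace (A ^ n) = trace (B ^ n)` for all
`n ≥ 1`, then `a = b`. -/
theorem stmt_6 (a b : ℕ) (A : Matrix (Fin a) (Fin a) ℂ) (B : Matrix (Fin b) (Fin b) ℂ)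
    (hA : IsUnit A) (hB : IsUnit B)
    (h : ∀ n : ℕ, 1 ≤ n → (A ^ n).trace = (B ^ n).trace) :
    a = b := by
  simpa only [Fintype.card_fin] using
    stmt_6_general (A.isUnit_iff_isUnit_det.1 hA).mem_nonZeroDivisors
      (B.isUnit_iff_isUnit_det.1 hB).mem_nonZeroDivisors fun k hk _ ↦ h k hk
end

section
/- Let k be a natural number and for each i with 0 ≤ i ≤ k let A_i be an invertible d_i × d_i complex matrix. If the alternating sum Σ_{i=0}^{k} (−1)^i · trace(A_i^n) equals 0 for every integer n ≥ 1, then the alternating sum Σ_{i=0}^{k} (−1)^i · d_i equals 0. -/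
open Matrix Finset

/-!
Let `L` be the linear functional `p ↦ ∑ i, (-1)^i * trace (p (A i))` on polynomials. It vanishes
on `X ^ n` for `n ≥ 1` by assumption, so `L p = p(0) * L 1`, where `L 1` is the alternating sum of
the dimensions. It also vanishes on the product of the characteristic polynomials of the `A i`, by
Cayley–Hamilton. The constant term of that product is `± ∏ det (A i) ≠ 0`, hence `L 1 = 0`.
-/

open Polynomial nonZeroDivisors

theorem map_eq_coeff_zero_smul_map_one {R M : Type*} [Semiring R] [AddCommMonoid M] [Module R M]
    (L : R[X] →ₗ[R] M) (p : R[X]) (hL : ∀ n, 1 ≤ n → n ≤ p.natDegree → L (X ^ n) = 0) :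
    L p = p.coeff 0 • L 1 := by
  have map_monomial (n : ℕ) (a : R) : L (monomial n a) = a • L (X ^ n) := by
    rw [← smul_X_eq_monomial, map_smul]
  calc
    L p = ∑ n ∈ range (p.natDegree + 1), p.coeff n • L (X ^ n) := by
      conv_lhs => rw [p.as_sum_range, map_sum]
      simp only [map_monomial]
    _ = p.coeff 0 • L (X ^ 0) := by
      refine sum_eq_single_of_mem 0 (by simp) fun n hn hn0 ↦ ?_
      rw [hL n (Nat.one_le_iff_ne_zero.2 hn0) (mem_range_succ_iff.1 hn), smul_zero]
    _ = p.coeff 0 • L 1 := by rw [pow_zero]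

section WeightedTrace

variable {R ι : Type*} [CommRing R] [Fintype ι] {m : ι → Type*} [∀ i, Fintype (m i)]
  [∀ i, DecidableEq (m i)]

/-- The linear functional `p ↦ ∑ i, c i * trace (p (A i))` on polynomials. With `c i = (-1) ^ i`
and `A` the action of `f` on homology, it sends `X ^ n` to the Lefschetz number of `f ^ n` and `1`
to the Euler characteristic. -/
noncomputable def weightedTrace (c : ι → R) (A : ∀ i, Matrix (m i) (m i) R) : R[X] →ₗ[R] R :=
  ∑ i, c i • traceLinearMap (m i) R R ∘ₗ (aeval (A i)).toLinearMap

theorem weightedTrace_apply (c : ι → R) (A : ∀ i, Matrix (m i) (m i) R) (p : R[X]) :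
    weightedTrace c A p = ∑ i, c i * (aeval (A i) p).trace := by
  simp [weightedTrace]

theorem weightedTrace_X_pow (c : ι → R) (A : ∀ i, Matrix (m i) (m i) R) (n : ℕ) :
    weightedTrace c A (X ^ n) = ∑ i, c i * (A i ^ n).trace := by
  simp [weightedTrace_apply]

theorem weightedTrace_one (c : ι → R) (A : ∀ i, Matrix (m i) (m i) R) :
    weightedTrace c A 1 = ∑ i, c i * (Fintype.card (m i) : R) := by
  simp [weightedTrace_apply]

theorem aeval_prod_charpoly_eq_zero (A : ∀ i, Matrix (m i) (m i) R) (i : ι) :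
    aeval (A i) (∏ j, (A j).charpoly) = 0 :=
  aeval_eq_zero_of_dvd_aeval_eq_zero (dvd_prod_of_mem _ (mem_univ i)) (aeval_self_charpoly (A i))

theorem weightedTrace_prod_charpoly_eq_zero (c : ι → R) (A : ∀ i, Matrix (m i) (m i) R) :
    weightedTrace c A (∏ i, (A i).charpoly) = 0 := by
  simp [weightedTrace_apply, aeval_prod_charpoly_eq_zero]

theorem natDegree_prod_charpoly_le (A : ∀ i, Matrix (m i) (m i) R) :
    (∏ i, (A i).charpoly).natDegree ≤ ∑ i, Fintype.card (m i) := by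
  nontriviality R
  simpa only [charpoly_natDegree_eq_dim] using natDegree_prod_le univ fun i ↦ (A i).charpoly

theorem coeff_zero_prod_charpoly_mem_nonZeroDivisors {A : ∀ i, Matrix (m i) (m i) R}
    (hA : ∀ i, (A i).det ∈ R⁰) : (∏ i, (A i).charpoly).coeff 0 ∈ R⁰ := by
  rw [coeff_zero_prod]
  refine prod_mem fun i _ ↦ ?_
  have h_det := hA i
  rw [det_eq_sign_charpoly_coeff] at h_det
  exact (mul_mem_nonZeroDivisors.1 h_det).2

theorem stmt_7_general (c : ι → R) (A : ∀ i, Matrix (m i) (m i) R) (hA : ∀ i, (A i).det ∈ R⁰)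
    (h : ∀ n : ℕ, 1 ≤ n → n ≤ ∑ i, Fintype.card (m i) → ∑ i, c i * (A i ^ n).trace = 0) :
    ∑ i, c i * (Fintype.card (m i) : R) = 0 := by
  have h_pow (n : ℕ) (h1 : 1 ≤ n) (hn : n ≤ (∏ i, (A i).charpoly).natDegree) :
      weightedTrace c A (X ^ n) = 0 := by
    rw [weightedTrace_X_pow]
    exact h n h1 (hn.trans (natDegree_prod_charpoly_le A))
  have h_mul : (∏ i, (A i).charpoly).coeff 0 * weightedTrace c A 1 = 0 :=
    (map_eq_coeff_zero_smul_map_one _ _ h_pow).symm.trans (weightedTrace_prod_charpoly_eq_zero c A)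
  rw [← weightedTrace_one c A]
  have h_coeff := coeff_zero_prod_charpoly_mem_nonZeroDivisors hA
  exact (mul_left_mem_nonZeroDivisors_eq_zero_iff h_coeff).1 h_mul

end WeightedTrace

/-- If invertible complex matrices `A i ∈ GL(d i, ℂ)`, `0 ≤ i ≤ k`, satisfy
`∑ i, (-1)^i * trace ((A i) ^ n) = 0` for every `n ≥ 1`, then `∑ i, (-1)^i * d i = 0`. -/
theorem stmt_7 (k : ℕ) (d : Fin (k + 1) → ℕ)
    (A : ∀ i, Matrix (Fin (d i)) (Fin (d i)) ℂ) (hA : ∀ i, IsUnit (A i))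
    (h : ∀ n : ℕ, 1 ≤ n →
      ∑ i : Fin (k + 1), (-1 : ℂ) ^ (i : ℕ) * ((A i) ^ n).trace = 0) :
    ∑ i : Fin (k + 1), (-1 : ℤ) ^ (i : ℕ) * (d i : ℤ) = 0 := by
  have h_det (i) : (A i).det ∈ ℂ⁰ := ((isUnit_iff_isUnit_det (A i)).1 (hA i)).mem_nonZeroDivisors
  have h_sum : ∑ i : Fin (k + 1), (-1 : ℂ) ^ (i : ℕ) * (d i : ℂ) = 0 := by
    simpa using stmt_7_general _ A h_det fun n h1 _ ↦ h n h1
  exact_mod_cast h_sum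
end

section
/- Let s and t be finite multisets of nonzero complex numbers. If for every integer n ≥ 1 the sum of the n-th powers of the elements of s (with multiplicity) equals the sum of the n-th powers of the elements of t (with multiplicity), then s = t. -/
/-! The characters `n ↦ z ^ n` of the monoid `ℕ` are pairwise distinct, hence linearly independent
by Dedekind's theorem. In characteristic zero, the power sums of a multiset for all `n ≥ 0`
therefore determine its multiplicities. The exponent `0`, which records the cardinality, is not
available here; padding both multisets with zeros up to a common cardinality leaves the other power
sums unchanged, and these zeros can be removed again because neither multiset contains `0`. -/

theorem linearIndependent_fun_pow (R : Type*) [CommRing R] [IsDomain R] :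
    LinearIndependent R (fun (z : R) (n : ℕ) ↦ z ^ n) :=
  (linearIndependent_monoidHom (Multiplicative ℕ) R).comp _ (powersHom R).injective

theorem multiset_sum_map_injective_of_linearIndependent {ι M : Type*} [AddCommMonoid M] {v : ι → M}
    (hv : LinearIndependent ℕ v) :
    Function.Injective fun s : Multiset ι ↦ (s.map v).sum := by
  classical
  have sum_eq (s : Multiset ι) :
      (s.map v).sum = Finsupp.linearCombination ℕ v (Multiset.toFinsupp s) :=
    Finset.sum_multiset_map_count s v
  intro s t hst
  simp only [sum_eq] at hst
  exact Multiset.toFinsupp.injective (hv hst)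

section PowerSums

variable {R : Type*} [CommRing R] [IsDomain R] [CharZero R] {s t : Multiset R}

theorem eq_of_forall_sum_map_pow_eq
    (h : ∀ n : ℕ, (s.map (· ^ n)).sum = (t.map (· ^ n)).sum) : s = t := by
  have linearIndependent_nat : LinearIndependent ℕ (fun (z : R) (n : ℕ) ↦ z ^ n) :=
    (linearIndependent_fun_pow R).restrict_scalars' ℕ
  apply multiset_sum_map_injective_of_linearIndependent linearIndependent_nat
  funext n
  simpa only [Pi.multiset_sum_apply, Multiset.map_map, Function.comp_def] using h n

theorem add_replicate_zero_eq_of_forall_sum_map_pow_eq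
    (h : ∀ n : ℕ, 1 ≤ n → (s.map (· ^ n)).sum = (t.map (· ^ n)).sum) :
    s + Multiset.replicate t.card 0 = t + Multiset.replicate s.card 0 := by
  refine eq_of_forall_sum_map_pow_eq fun n ↦ ?_
  obtain rfl | hn := n.eq_zero_or_pos
  · simp [add_comm]
  · simp [h n hn, hn.ne']

theorem stmt_8_general (hs : 0 ∉ s) (ht : 0 ∉ t)
    (h : ∀ n : ℕ, 1 ≤ n → (s.map (· ^ n)).sum = (t.map (· ^ n)).sum) : s = t := by
  classical
  have filter_add_zeros {u : Multiset R} (hu : 0 ∉ u) (k : ℕ) :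
      (u + Multiset.replicate k 0).filter (· ≠ 0) = u := by
    rw [Multiset.filter_add, Multiset.filter_eq_self.2 fun _ hz ↦ ne_of_mem_of_not_mem hz hu,
      Multiset.filter_eq_nil.2 fun _ hz ↦ not_not.2 (Multiset.eq_of_mem_replicate hz), add_zero]
  rw [← filter_add_zeros hs t.card, add_replicate_zero_eq_of_forall_sum_map_pow_eq h,
    filter_add_zeros ht]

end PowerSums

/-- Two finite multisets of nonzero complex numbers with equal `n`-th power sums for all
`n ≥ 1` are equal. -/
theorem stmt_8 (s t : Multiset ℂ) (hs : (0 : ℂ) ∉ s) (ht : (0 : ℂ) ∉ t)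
    (h : ∀ n : ℕ, 1 ≤ n → (s.map (fun z => z ^ n)).sum = (t.map (fun z => z ^ n)).sum) :
    s = t :=
  stmt_8_general hs ht h
end

section
/- Let n ≥ 3 be an integer. Every normal subgroup of SL(n, ℤ) is either finite or of finite index in SL(n, ℤ). -/
open Matrix
open scoped commutatorElement

/-!
Let `N` be a normal subgroup. If `N` is central it is finite, since the center consists of roots of
unity. Otherwise, the commutator of a noncentral `h ∈ N` with a transvection is a product of two
transvections, so it preserves a nonzero covector; commutators of such elements with transvections
are again transvections, and moving them around with further commutators shows that, for all
`i ≠ j`, `N` contains the matrices `1 + a E_ij` for all `a` in some nonzero ideal.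

In the quotient `G` by `N` each root subgroup `{1 + a E_ij}` therefore has finite image. As in
Suslin's normality theorem, the transvections `v ↦ v + (w ⬝ᵥ v) • x` with `w` unimodular are
products of a bounded number of transvections with `x` vanishing at some coordinate, and these are
products of a bounded number of elementary ones. Hence the images of all of them form a finite set.
It is stable under conjugation and generates `G`, because the Euclidean algorithm makes elementary
matrices generate the special linear group. So the center of `G` has finite index, and by a theorem
of Schur the commutator subgroup of `G` is finite; but `G` is perfect.
-/

theorem exists_ne_ne_of_three_le_card {κ : Type*} [Fintype κ] (hκ : 3 ≤ Fintype.card κ)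
    (k l : κ) : ∃ m, m ≠ k ∧ m ≠ l :=
  Cardinal.exists_ne_ne_of_three_le (by rw [Cardinal.mk_fintype]; exact_mod_cast hκ) k l

theorem map_sum_eq_list_prod {κ M G : Type*} [AddCommMonoid M] [Monoid G] (F : M → G)
    (p : M → Prop) (hp : p 0) (hF : F 0 = 1) (hp_add : ∀ x y, p x → p y → p (x + y))
    (hF_add : ∀ x y, p x → p y → F (x + y) = F x * F y)
    (s : Finset κ) (f : κ → M) (hf : ∀ k ∈ s, p (f k)) :
    F (∑ k ∈ s, f k) = (s.toList.map fun k => F (f k)).prod := by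
  have hlist : ∀ l : List κ, (∀ k ∈ l, p (f k)) →
      p (l.map f).sum ∧ F (l.map f).sum = (l.map fun k => F (f k)).prod := by
    intro l
    induction l with
    | nil => exact fun _ => ⟨hp, hF⟩
    | cons k l ih =>
      intro hl
      obtain ⟨hpl, hFl⟩ := ih fun j hj => hl j (List.mem_cons_of_mem _ hj)
      have hk := hl k List.mem_cons_self
      simp only [List.map_cons, List.sum_cons, List.prod_cons]
      exact ⟨hp_add _ _ hk hpl, by rw [hF_add _ _ hk hpl, hFl]⟩
  rw [← Finset.sum_map_toList]
  exact (hlist s.toList fun k hk => hf k (Finset.mem_toList.mp hk)).2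

theorem finite_setOf_list_prod {κ M : Type*} [Monoid M] (l : List κ) {A : κ → Set M}
    (hA : ∀ k ∈ l, (A k).Finite) :
    {x | ∃ f : κ → M, (∀ k ∈ l, f k ∈ A k) ∧ (l.map f).prod = x}.Finite := by
  induction l with
  | nil => exact (Set.finite_singleton 1).subset fun _ ⟨_, _, hx⟩ => hx.symm
  | cons k l ih =>
    rw [List.forall_mem_cons] at hA
    refine (hA.1.mul (ih hA.2)).subset ?_
    rintro _ ⟨f, hf, rfl⟩
    rw [List.forall_mem_cons] at hf
    exact Set.mul_mem_mul hf.1 ⟨f, hf.2, rfl⟩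

section GroupTheory

variable {G : Type*} [Group G]

theorem commutator_mem_of_left_mem {N : Subgroup G} [N.Normal] {g : G}
    (hg : g ∈ N) (h : G) : ⁅g, h⁆ ∈ N :=
  Subgroup.commutator_le_left N ⊤ (Subgroup.commutator_mem_commutator hg (Subgroup.mem_top h))

theorem commutator_mem_of_right_mem {N : Subgroup G} [N.Normal] {h : G}
    (g : G) (hh : h ∈ N) : ⁅g, h⁆ ∈ N :=
  Subgroup.commutator_le_right ⊤ N (Subgroup.commutator_mem_commutator (Subgroup.mem_top g) hh)

theorem finiteIndex_centralizer_of_finite_conjugates {s : G}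
    (hs : {x | ∃ g, g * s * g⁻¹ = x}.Finite) : (Subgroup.centralizer {s}).FiniteIndex := by
  have := hs.to_subtype
  let conj (q : G ⧸ Subgroup.centralizer {s}) : {x | ∃ g, g * s * g⁻¹ = x} :=
    ⟨q.out * s * q.out⁻¹, q.out, rfl⟩
  have hconj : Function.Injective conj := by
    intro p q hpq
    have hpq' : p.out * s * p.out⁻¹ = q.out * s * q.out⁻¹ := congrArg Subtype.val hpq
    rw [← p.out_eq', ← q.out_eq', QuotientGroup.eq, Subgroup.mem_centralizer_singleton_iff]
    rw [mul_inv_eq_iff_eq_mul] at hpq'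
    calc p.out⁻¹ * q.out * s = p.out⁻¹ * (q.out * s * q.out⁻¹ * p.out) * (p.out⁻¹ * q.out) := by
          group
      _ = s * (p.out⁻¹ * q.out) := by rw [← hpq']; group
  have := Finite.of_injective conj hconj
  exact Subgroup.finiteIndex_of_finite_quotient

theorem finiteIndex_center_of_finite_closure_eq_top {S : Set G} (hS : S.Finite)
    (hconj : ∀ g, ∀ s ∈ S, g * s * g⁻¹ ∈ S) (hclosure : Subgroup.closure S = ⊤) :
    (Subgroup.center G).FiniteIndex := by
  have := hS.to_subtype
  rw [Subgroup.center_eq_infi' hclosure]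
  refine Subgroup.finiteIndex_iInf fun s =>
    finiteIndex_centralizer_of_finite_conjugates (hS.subset ?_)
  rintro _ ⟨g, rfl⟩
  exact hconj g s s.2

theorem commutator_mul_left_of_mem_center (g h : G) {z : G} (hz : z ∈ Subgroup.center G) :
    ⁅g * z, h⁆ = ⁅g, h⁆ := by
  rw [commutatorElement_def, mul_assoc g z h, ← Subgroup.mem_center_iff.mp hz h]
  group

theorem commutator_mul_mul_of_mem_center (g h : G) {z z' : G} (hz : z ∈ Subgroup.center G)
    (hz' : z' ∈ Subgroup.center G) : ⁅g * z, h * z'⁆ = ⁅g, h⁆ := by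
  rw [commutator_mul_left_of_mem_center g _ hz, ← commutatorElement_inv,
    commutator_mul_left_of_mem_center h _ hz', commutatorElement_inv]

theorem finite_commutatorSet_of_finiteIndex_center [(Subgroup.center G).FiniteIndex] :
    (commutatorSet G).Finite := by
  have := Subgroup.finite_quotient_of_finiteIndex (H := Subgroup.center G)
  refine (Set.finite_range fun p : (G ⧸ Subgroup.center G) × (G ⧸ Subgroup.center G) =>
    ⁅p.1.out, p.2.out⁆).subset ?_
  rintro _ ⟨g, h, rfl⟩
  obtain ⟨z, hz⟩ := QuotientGroup.mk_out_eq_mul (Subgroup.center G) g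
  obtain ⟨z', hz'⟩ := QuotientGroup.mk_out_eq_mul (Subgroup.center G) h
  exact ⟨(g, h), by simp only [hz, hz', commutator_mul_mul_of_mem_center g h z.2 z'.2]⟩

theorem finite_of_isPerfect_of_finite_closure_eq_top [Group.IsPerfect G] {S : Set G}
    (hS : S.Finite) (hconj : ∀ g, ∀ s ∈ S, g * s * g⁻¹ ∈ S)
    (hclosure : Subgroup.closure S = ⊤) : Finite G := by
  have := finiteIndex_center_of_finite_closure_eq_top hS hconj hclosure
  have := (finite_commutatorSet_of_finiteIndex_center (G := G)).to_subtype
  have hfinite : Finite (commutator G) := inferInstance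
  rw [Group.IsPerfect.commutator_eq_top] at hfinite
  exact Finite.of_equiv _ Subgroup.topEquiv.toEquiv

end GroupTheory

section Transvec

variable {ι R : Type*} [Fintype ι] [DecidableEq ι] [CommRing R]

theorem eq_of_forall_smul_eq {g h : SpecialLinearGroup ι R}
    (H : ∀ v : ι → R, g • v = h • v) : g = h :=
  Subtype.ext (mulVec_injective (funext H))

theorem eq_of_forall_smul_single_eq {g h : SpecialLinearGroup ι R}
    (H : ∀ j, g • (Pi.single j 1 : ι → R) = h • Pi.single j 1) : g = h :=
  Subtype.ext (ext_of_mulVec_single H)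

theorem vecMul_dotProduct_eq (w v : ι → R) (g : SpecialLinearGroup ι R) :
    (w ᵥ* (g : Matrix ι ι R)) ⬝ᵥ v = w ⬝ᵥ (g • v) :=
  (dotProduct_mulVec w (g : Matrix ι ι R) v).symm

/-- The transvection `v ↦ v + (w ⬝ᵥ v) • x` of a vector `x` and a covector `w` that kills it.
When `w ⬝ᵥ x ≠ 0` this map need not have determinant `1`, and the value is `1`. -/
noncomputable def transvec (x w : ι → R) : SpecialLinearGroup ι R := by
  classical exact
  if h : w ⬝ᵥ x = 0 then
    ⟨1 + vecMulVec x w, by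
      rw [vecMulVec_eq Unit, det_one_add_replicateCol_mul_replicateRow, h, add_zero]⟩
  else 1

variable {x y v w d : ι → R}

theorem transvec_smul (h : w ⬝ᵥ x = 0) (v : ι → R) :
    transvec x w • v = v + (w ⬝ᵥ v) • x := by
  have hcoe : (transvec x w : Matrix ι ι R) = 1 + vecMulVec x w := by simp [transvec, h]
  change (transvec x w : Matrix ι ι R) *ᵥ v = _
  rw [hcoe, add_mulVec, one_mulVec, vecMulVec_mulVec, op_smul_eq_smul]

theorem transvec_zero_left (w : ι → R) : transvec 0 w = 1 :=
  eq_of_forall_smul_eq fun v => by simp [transvec_smul]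

theorem transvec_zero_right (x : ι → R) : transvec x 0 = 1 :=
  eq_of_forall_smul_eq fun v => by simp [transvec_smul]

theorem transvec_add_left (hx : w ⬝ᵥ x = 0) (hy : w ⬝ᵥ y = 0) :
    transvec (x + y) w = transvec x w * transvec y w :=
  eq_of_forall_smul_eq fun v => by
    simp [mul_smul, transvec_smul, hx, hy, add_assoc]

theorem transvec_add_right (hw : w ⬝ᵥ x = 0) (hd : d ⬝ᵥ x = 0) :
    transvec x (w + d) = transvec x w * transvec x d :=
  eq_of_forall_smul_eq fun v => by
    simp [mul_smul, transvec_smul, hw, hd, add_smul, add_assoc]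

theorem transvec_smul_right (h : w ⬝ᵥ x = 0) (r : R) :
    transvec x (r • w) = transvec (r • x) w :=
  eq_of_forall_smul_eq fun v => by
    simp [transvec_smul, h, smul_smul, mul_comm]

theorem inv_transvec (h : w ⬝ᵥ x = 0) : (transvec x w)⁻¹ = transvec (-x) w := by
  rw [inv_eq_iff_mul_eq_one, ← transvec_add_left h (by rw [dotProduct_neg, h, neg_zero]),
    add_neg_cancel, transvec_zero_left]

theorem conj_transvec (g : SpecialLinearGroup ι R) (h : w ⬝ᵥ x = 0) :
    g * transvec x w * g⁻¹ =
      transvec (g • x) (w ᵥ* ((g⁻¹ : SpecialLinearGroup ι R) : Matrix ι ι R)) :=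
  eq_of_forall_smul_eq fun v => by
    rw [transvec_smul (by rw [vecMul_dotProduct_eq, inv_smul_smul, h]), mul_smul, mul_smul,
      transvec_smul h, smul_add, smul_inv_smul, smul_comm, vecMul_dotProduct_eq]

theorem commutator_transvec_of_forall_dotProduct_smul (g : SpecialLinearGroup ι R)
    (h : w ⬝ᵥ x = 0) (hg : ∀ v, w ⬝ᵥ (g • v) = w ⬝ᵥ v) :
    ⁅g, transvec x w⁆ = transvec (g • x - x) w := by
  have hw : w ᵥ* ((g⁻¹ : SpecialLinearGroup ι R) : Matrix ι ι R) = w :=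
    dotProduct_eq _ _ fun v => by rw [vecMul_dotProduct_eq, ← hg, smul_inv_smul]
  rw [commutatorElement_def, conj_transvec g h, hw, inv_transvec h,
    ← transvec_add_left (by rw [hg, h]) (by rw [dotProduct_neg, h, neg_zero]), sub_eq_add_neg]

theorem commutator_transvec (hwx : w ⬝ᵥ x = 0) (hdy : d ⬝ᵥ y = 0) (hdx : d ⬝ᵥ x = 0) :
    ⁅transvec x w, transvec y d⁆ = transvec ((w ⬝ᵥ y) • x) d := by
  rw [commutator_transvec_of_forall_dotProduct_smul _ hdy, transvec_smul hwx, add_sub_cancel_left]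
  intro v
  rw [transvec_smul hwx, dotProduct_add, dotProduct_smul, hdx, smul_zero, add_zero]

theorem transvec_sum_left {κ : Type*} (s : Finset κ) (f : κ → ι → R)
    (hf : ∀ k ∈ s, w ⬝ᵥ f k = 0) :
    transvec (∑ k ∈ s, f k) w = (s.toList.map fun k => transvec (f k) w).prod :=
  map_sum_eq_list_prod (transvec · w) (w ⬝ᵥ · = 0) (dotProduct_zero w) (transvec_zero_left w)
    (fun x y hx hy => by rw [dotProduct_add, hx, hy, add_zero])
    (fun x y hx hy => transvec_add_left hx hy) s f hf

theorem transvec_sum_right {κ : Type*} (s : Finset κ) (f : κ → ι → R)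
    (hf : ∀ k ∈ s, f k ⬝ᵥ x = 0) :
    transvec x (∑ k ∈ s, f k) = (s.toList.map fun k => transvec x (f k)).prod :=
  map_sum_eq_list_prod (transvec x ·) (· ⬝ᵥ x = 0) (zero_dotProduct x) (transvec_zero_right x)
    (fun w d hw hd => by rw [add_dotProduct, hw, hd, add_zero])
    (fun w d hw hd => transvec_add_right hw hd) s f hf

end Transvec

section Orthogonality

variable {ι R : Type*} [Fintype ι] [CommRing R]

theorem exists_ne_zero_dotProduct_eq_zero₂ [Nontrivial R] (hι : 3 ≤ Fintype.card ι)
    (a b : ι → R) : ∃ d : ι → R, d ≠ 0 ∧ d ⬝ᵥ a = 0 ∧ d ⬝ᵥ b = 0 := by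
  classical
  let f : (ι → R) →ₗ[R] Fin 2 → R := (Matrix.of ![a, b]).mulVecLin
  have hf : ¬ Function.Injective f := fun hf => by
    have := card_le_of_injective R f hf
    rw [Fintype.card_fin] at this
    omega
  obtain ⟨d, hd, hd0⟩ : ∃ d, f d = 0 ∧ d ≠ 0 := by
    simpa only [injective_iff_map_eq_zero, not_forall, exists_prop] using hf
  refine ⟨d, hd0, ?_, ?_⟩
  · simpa [f, dotProduct_comm] using congrFun hd 0
  · simpa [f, dotProduct_comm] using congrFun hd 1

theorem exists_dotProduct_ne_zero_or_smul_eq_smul [NoZeroDivisors R] {b d : ι → R}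
    (hb : b ≠ 0) (hd : d ≠ 0) :
    (∃ x, d ⬝ᵥ x = 0 ∧ b ⬝ᵥ x ≠ 0) ∨ ∃ s t : R, t ≠ 0 ∧ s • b = t • d := by
  classical
  obtain ⟨l, hl⟩ := Function.ne_iff.mp hd
  by_cases h : ∃ k, b k * d l - b l * d k ≠ 0
  · obtain ⟨k, hk⟩ := h
    refine .inl ⟨d l • Pi.single k 1 - d k • Pi.single l 1, ?_, ?_⟩
    · simp only [dotProduct_sub, dotProduct_smul, dotProduct_single_one, smul_eq_mul]
      ring
    · convert hk using 1
      simp only [dotProduct_sub, dotProduct_smul, dotProduct_single_one, smul_eq_mul]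
      ring
  · push Not at h
    have hbd : d l • b = b l • d := by
      ext k
      rw [Pi.smul_apply, Pi.smul_apply, smul_eq_mul, smul_eq_mul]
      linear_combination h k
    refine .inr ⟨d l, b l, fun hbl => ?_, hbd⟩
    rw [hbl, zero_smul] at hbd
    exact hb ((smul_eq_zero.mp hbd).resolve_left hl)

end Orthogonality

section NormalSubgroup

variable {ι R : Type*} [Fintype ι] [DecidableEq ι] [CommRing R]
  {N : Subgroup (SpecialLinearGroup ι R)}

/-- `N` contains the transvections along `(a • x, w)` for all `a` in some nonzero principal ideal:
the one-parameter group of transvections along `(x, w)` lies in `N` up to a finite quotient when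
`R` has finite quotients. -/
def ContainsTransvecMultiples (N : Subgroup (SpecialLinearGroup ι R)) (x w : ι → R) : Prop :=
  ∃ q : R, q ≠ 0 ∧ ∀ a : R, transvec ((a * q) • x) w ∈ N

variable [IsDomain R] {x y w d : ι → R}

theorem ContainsTransvecMultiples.change_right [N.Normal] (h : ContainsTransvecMultiples N x w)
    (hw : w ≠ 0) (hd : d ≠ 0) (hwx : w ⬝ᵥ x = 0) (hdx : d ⬝ᵥ x = 0) :
    ContainsTransvecMultiples N x d := by
  obtain ⟨q, hq, hN⟩ := h
  have hwx' (a : R) : w ⬝ᵥ (a • x) = 0 := by rw [dotProduct_smul, hwx, smul_zero]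
  have hdx' (a : R) : d ⬝ᵥ (a • x) = 0 := by rw [dotProduct_smul, hdx, smul_zero]
  rcases exists_dotProduct_ne_zero_or_smul_eq_smul hw hd with ⟨y, hdy, hwy⟩ | ⟨s, t, ht, hst⟩
  · refine ⟨(w ⬝ᵥ y) * q, mul_ne_zero hwy hq, fun a => ?_⟩
    rw [mul_left_comm, mul_smul, ← commutator_transvec (hwx' _) hdy (hdx' _)]
    exact commutator_mem_of_left_mem (hN a) _
  · refine ⟨t * q, mul_ne_zero ht hq, fun a => ?_⟩
    rw [mul_left_comm, mul_smul, ← transvec_smul_right (hdx' _), ← hst,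
      transvec_smul_right (hwx' _), ← mul_smul, ← mul_assoc]
    exact hN _

theorem ContainsTransvecMultiples.change_left [N.Normal] (h : ContainsTransvecMultiples N x w)
    (hx : x ≠ 0) (hy : y ≠ 0) (hwx : w ⬝ᵥ x = 0) (hwy : w ⬝ᵥ y = 0) :
    ContainsTransvecMultiples N y w := by
  obtain ⟨q, hq, hN⟩ := h
  rcases exists_dotProduct_ne_zero_or_smul_eq_smul hx hy with ⟨c, hyc, hxc⟩ | ⟨s, t, ht, hst⟩
  · refine ⟨q * (x ⬝ᵥ c), mul_ne_zero hq hxc, fun a => ?_⟩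
    have hcomm : ⁅transvec y c, transvec ((a * q) • x) w⁆ =
        transvec ((a * (q * (x ⬝ᵥ c))) • y) w := by
      rw [commutator_transvec (by rwa [dotProduct_comm])
        (by rw [dotProduct_smul, hwx, smul_zero]) hwy, dotProduct_smul, dotProduct_comm c,
        smul_eq_mul, mul_assoc]
    exact hcomm ▸ commutator_mem_of_right_mem _ (hN a)
  · refine ⟨q * t, mul_ne_zero hq ht, fun a => ?_⟩
    rw [← mul_assoc, mul_smul, ← hst, smul_smul, mul_right_comm]
    exact hN _

theorem containsTransvecMultiples_single_of_transvec_mem [N.Normal] (hι : 3 ≤ Fintype.card ι)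
    (hx : x ≠ 0) (hw : w ≠ 0) (hwx : w ⬝ᵥ x = 0) (hN : transvec x w ∈ N) {i j : ι} (hij : i ≠ j) :
    ContainsTransvecMultiples N (Pi.single i (1 : R)) (Pi.single j (1 : R)) := by
  obtain ⟨k, hk⟩ := Function.ne_iff.mp hw
  obtain ⟨d, hd, hdk, hdx⟩ := exists_ne_zero_dotProduct_eq_zero₂ hι (Pi.single k 1) x
  have hxd : ContainsTransvecMultiples N x d := by
    refine ⟨w k, hk, fun a => ?_⟩
    have hcomm : ⁅transvec x w, transvec (a • Pi.single k 1) d⁆ = transvec ((a * w k) • x) d := by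
      rw [commutator_transvec hwx (by rw [dotProduct_smul, hdk, smul_zero]) hdx, dotProduct_smul,
        dotProduct_single_one, smul_eq_mul]
    exact hcomm ▸ commutator_mem_of_left_mem hN _
  obtain ⟨e, he, hex, hei⟩ := exists_ne_zero_dotProduct_eq_zero₂ hι x (Pi.single i 1)
  exact ((hxd.change_right hd he hdx hex).change_left hx (by simp) hex hei).change_right he
    (by simp) hei (by simp [hij])

theorem exists_transvec_mem_of_forall_dotProduct_smul [N.Normal] (hι : 3 ≤ Fintype.card ι)
    {g : SpecialLinearGroup ι R} (hg : g ∈ N) (hg1 : g ≠ 1) (hd : d ≠ 0)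
    (hgd : ∀ v, d ⬝ᵥ (g • v) = d ⬝ᵥ v) :
    ∃ x w : ι → R, x ≠ 0 ∧ w ≠ 0 ∧ w ⬝ᵥ x = 0 ∧ transvec x w ∈ N := by
  have transvec_mem {v w : ι → R} (hwv : w ⬝ᵥ v = 0) (hgw : ∀ u, w ⬝ᵥ (g • u) = w ⬝ᵥ u) :
      w ⬝ᵥ (g • v - v) = 0 ∧ transvec (g • v - v) w ∈ N := by
    refine ⟨by rw [dotProduct_sub, hgw, sub_self], ?_⟩
    rw [← commutator_transvec_of_forall_dotProduct_smul g hwv hgw]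
    exact commutator_mem_of_left_mem hg _
  by_cases hfix : ∃ v, d ⬝ᵥ v = 0 ∧ g • v ≠ v
  · obtain ⟨v, hdv, hgv⟩ := hfix
    exact ⟨g • v - v, d, sub_ne_zero.mpr hgv, hd, transvec_mem hdv hgd⟩
  push Not at hfix
  obtain ⟨j, hj⟩ := Function.ne_iff.mp hd
  have hgv (v : ι → R) : d j • (g • v - v) =
      (d ⬝ᵥ v) • (g • (Pi.single j 1 : ι → R) - Pi.single j 1) := by
    have h := hfix (d j • v - (d ⬝ᵥ v) • Pi.single j 1) (by simp [mul_comm])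
    rw [smul_sub, smul_comm g, smul_comm g, sub_eq_sub_iff_sub_eq_sub] at h
    rw [smul_sub, smul_sub, h]
  have hgj : g • (Pi.single j 1 : ι → R) - Pi.single j 1 ≠ 0 := by
    refine fun h0 => hg1 (eq_of_forall_smul_eq fun v => ?_)
    have hv := hgv v
    rw [h0, smul_zero] at hv
    rw [one_smul, sub_eq_zero.mp ((smul_eq_zero.mp hv).resolve_left hj)]
  obtain ⟨e, he, hegj, hej⟩ := exists_ne_zero_dotProduct_eq_zero₂ hι
    (g • (Pi.single j 1 : ι → R) - Pi.single j 1) (Pi.single j 1)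
  have hge (v : ι → R) : e ⬝ᵥ (g • v) = e ⬝ᵥ v := by
    have h := congrArg (e ⬝ᵥ ·) (hgv v)
    simp only [dotProduct_smul, hegj, smul_zero] at h
    rw [← sub_eq_zero, ← dotProduct_sub]
    exact (smul_eq_zero.mp h).resolve_left hj
  exact ⟨_, e, hgj, he, transvec_mem hej hge⟩

end NormalSubgroup

section Elementary

variable {ι : Type*} (R : Type*) [Fintype ι] [DecidableEq ι] [CommRing R]

/-- The subgroup generated by the elementary matrices `1 + a E_ij` whose column index `j` lies in
`s`. It fixes the basis vectors outside `s`, which makes induction on `s` possible. -/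
def elementarySubgroup (s : Finset ι) : Subgroup (SpecialLinearGroup ι R) :=
  Subgroup.closure {g | ∃ i, ∃ j ∈ s, ∃ a : R,
    i ≠ j ∧ transvec (Pi.single i a) (Pi.single j 1) = g}

variable {R} {s t : Finset ι} {g h : SpecialLinearGroup ι R} {i j k : ι} {v : ι → R}

theorem single_dotProduct_single_of_ne (hij : i ≠ j) (a b : R) :
    (Pi.single j b : ι → R) ⬝ᵥ Pi.single i a = 0 := by
  simp [hij]

theorem transvec_single_mem_elementarySubgroup (hij : i ≠ j) (hj : j ∈ s) (a : R) :
    transvec (Pi.single i a) (Pi.single j 1) ∈ elementarySubgroup R s :=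
  Subgroup.subset_closure ⟨i, j, hj, a, hij, rfl⟩

theorem elementarySubgroup_mono (hst : s ⊆ t) : elementarySubgroup R s ≤ elementarySubgroup R t :=
  Subgroup.closure_mono fun _ ⟨i, j, hj, a, hij, hg⟩ => ⟨i, j, hst hj, a, hij, hg⟩

theorem smul_single_of_mem_elementarySubgroup (hg : g ∈ elementarySubgroup R s) (hj : j ∉ s) :
    g • (Pi.single j 1 : ι → R) = Pi.single j 1 := by
  suffices elementarySubgroup R s ≤ MulAction.stabilizer _ (Pi.single j 1 : ι → R) from this hg
  rw [elementarySubgroup, Subgroup.closure_le]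
  rintro _ ⟨i, k, hk, a, hik, rfl⟩
  have hjk : j ≠ k := fun h => hj (h ▸ hk)
  simp [MulAction.mem_stabilizer_iff, transvec_smul (single_dotProduct_single_of_ne hik a 1), hjk]

theorem transvec_single_mem_elementarySubgroup_of_apply_eq_zero (hj : j ∈ s) (hv : v j = 0) :
    transvec v (Pi.single j 1) ∈ elementarySubgroup R s := by
  have hsingle (i : ι) : i ≠ j ∨ v i = 0 := by grind
  rw [← Finset.univ_sum_single v, transvec_sum_left]
  · refine Subgroup.list_prod_mem _ fun g hg => ?_
    obtain ⟨i, -, rfl⟩ := List.mem_map.mp hg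
    rcases hsingle i with hij | hi
    · exact transvec_single_mem_elementarySubgroup hij hj _
    · simp [hi, transvec_zero_left, one_mem]
  · intro i _
    rcases hsingle i with hij | hi
    · exact single_dotProduct_single_of_ne hij _ _
    · simp [hi]

theorem exists_mem_elementarySubgroup_smul_eq_single (hk : k ∈ s) (hv : v k = 1) :
    ∃ h ∈ elementarySubgroup R s, h • v = Pi.single k 1 := by
  refine ⟨transvec (Pi.single k 1 - v) (Pi.single k 1),
    transvec_single_mem_elementarySubgroup_of_apply_eq_zero hk (by simp [hv]), ?_⟩
  rw [transvec_smul (by simp [hv]), single_one_dotProduct, hv, one_smul, add_sub_cancel]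

theorem transvec_single_smul_apply (hij : i ≠ j) (a : R) (v : ι → R) :
    (transvec (Pi.single i a) (Pi.single j 1) • v) i = v i + v j * a := by
  simp [transvec_smul (single_dotProduct_single_of_ne hij a 1)]

theorem exists_mem_elementarySubgroup_smul_apply_eq_one_of_ne (hij : i ≠ j) (hj : j ∈ s)
    (hv : IsUnit (v j)) : ∃ h ∈ elementarySubgroup R s, (h • v) i = 1 := by
  obtain ⟨b, hb⟩ := hv.exists_right_inv
  refine ⟨_, transvec_single_mem_elementarySubgroup hij hj (b * (1 - v i)), ?_⟩
  rw [transvec_single_smul_apply hij]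
  linear_combination (1 - v i) * hb

theorem exists_mem_elementarySubgroup_smul_apply_eq_one (hj : j ∈ s) (hv : IsUnit (v j))
    (hk : k ∈ s) (hs : ∃ l ∈ s, l ≠ k) : ∃ h ∈ elementarySubgroup R s, (h • v) k = 1 := by
  rcases eq_or_ne k j with rfl | hkj
  · obtain ⟨l, hl, hlk⟩ := hs
    obtain ⟨h, hh, hhl⟩ := exists_mem_elementarySubgroup_smul_apply_eq_one_of_ne hlk hk hv
    obtain ⟨h', hh', hhk⟩ := exists_mem_elementarySubgroup_smul_apply_eq_one_of_ne hlk.symm hl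
      (hhl ▸ isUnit_one)
    exact ⟨h' * h, mul_mem hh' hh, by rw [mul_smul, hhk]⟩
  · exact exists_mem_elementarySubgroup_smul_apply_eq_one_of_ne hkj hj hv

theorem smul_single_apply_eq_one
    (hg : ∀ j, j ≠ k → g • (Pi.single j 1 : ι → R) = Pi.single j 1) :
    (g • (Pi.single k 1 : ι → R)) k = 1 := by
  have hupdate : (g : Matrix ι ι R) =
      (1 : Matrix ι ι R).updateCol k (g • (Pi.single k 1 : ι → R)) := by
    refine ext_of_mulVec_single fun j => ?_
    rcases eq_or_ne j k with rfl | hjk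
    · have hcol : g • (Pi.single j 1 : ι → R) = (g : Matrix ι ι R).col j := mulVec_single_one _ _
      ext i
      simp [hcol]
    · refine (hg j hjk).trans ?_
      ext i
      simp [hjk, Matrix.one_apply, Pi.single_apply]
  have hdet := g.det_coe
  rwa [hupdate, ← cramer_apply, cramer_one] at hdet

end Elementary

section EuclideanAlgorithm

variable {ι R : Type*} [Fintype ι] [DecidableEq ι] [EuclideanDomain R] {s : Finset ι}

theorem exists_mem_elementarySubgroup_smul_apply_dvd {v : ι → R} (hv : ∃ i ∈ s, v i ≠ 0) :
    ∃ h ∈ elementarySubgroup R s, ∃ j ∈ s, ∀ i ∈ s, (h • v) j ∣ (h • v) i := by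
  let entries : Set R := {a | a ≠ 0 ∧ ∃ h ∈ elementarySubgroup R s, ∃ j ∈ s, (h • v) j = a}
  have hentries : entries.Nonempty :=
    let ⟨i, hi, hvi⟩ := hv
    ⟨v i, hvi, 1, one_mem _, i, hi, by rw [one_smul]⟩
  obtain ⟨a, ⟨ha, h, hh, j, hj, rfl⟩, hmin⟩ :=
    EuclideanDomain.r_wellFounded.has_min entries hentries
  refine ⟨h, hh, j, hj, fun i hi => ?_⟩
  rcases eq_or_ne i j with rfl | hij
  · exact dvd_rfl
  by_contra hndvd
  let q := (h • v) i / (h • v) j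
  refine hmin ((h • v) i % (h • v) j)
    ⟨mt EuclideanDomain.mod_eq_zero.mp hndvd, transvec (Pi.single i (-q)) (Pi.single j 1) * h,
      mul_mem (transvec_single_mem_elementarySubgroup hij hj _) hh, i, hi, ?_⟩
    (EuclideanDomain.mod_lt _ ha)
  rw [mul_smul, transvec_single_smul_apply hij, EuclideanDomain.mod_eq_sub_mul_div, mul_neg,
    ← sub_eq_add_neg]

theorem exists_mem_elementarySubgroup_isUnit_smul_apply {u v : ι → R} (hu : ∀ i ∉ s, u i = 0)
    (huv : u ⬝ᵥ v = 1) : ∃ h ∈ elementarySubgroup R s, ∃ j ∈ s, IsUnit ((h • v) j) := by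
  have hv : ∃ i ∈ s, v i ≠ 0 := by
    by_contra! hv
    refine one_ne_zero (α := R) (huv.symm.trans (Finset.sum_eq_zero fun i _ => ?_))
    by_cases hi : i ∈ s
    · rw [hv i hi, mul_zero]
    · rw [hu i hi, zero_mul]
  obtain ⟨h, hh, j, hj, hdvd⟩ := exists_mem_elementarySubgroup_smul_apply_dvd hv
  refine ⟨h, hh, j, hj, isUnit_of_dvd_one ?_⟩
  let u' := u ᵥ* ((h⁻¹ : SpecialLinearGroup ι R) : Matrix ι ι R)
  have hu'v : u' ⬝ᵥ (h • v) = 1 := by rw [vecMul_dotProduct_eq, inv_smul_smul, huv]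
  have hu' (i : ι) (hi : i ∉ s) : u' i = 0 := by
    rw [← dotProduct_single_one u' i, vecMul_dotProduct_eq,
      smul_single_of_mem_elementarySubgroup (inv_mem hh) hi, dotProduct_single_one, hu i hi]
  rw [← hu'v]
  refine Finset.dvd_sum fun i _ => ?_
  by_cases hi : i ∈ s
  · exact (hdvd i hi).mul_left _
  · rw [hu' i hi, zero_mul]
    exact dvd_zero _

theorem exists_mem_elementarySubgroup_smul_smul_single {g : SpecialLinearGroup ι R} {k : ι}
    (hk : k ∈ s) (hg : ∀ j ∉ s, g • (Pi.single j 1 : ι → R) = Pi.single j 1) :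
    ∃ h ∈ elementarySubgroup R s, h • g • (Pi.single k 1 : ι → R) = Pi.single k 1 := by
  suffices ∃ h ∈ elementarySubgroup R s, (h • g • (Pi.single k 1 : ι → R)) k = 1 by
    obtain ⟨h, hh, hhk⟩ := this
    obtain ⟨h', hh', hh'k⟩ := exists_mem_elementarySubgroup_smul_eq_single hk hhk
    exact ⟨h' * h, mul_mem hh' hh, by rw [mul_smul, hh'k]⟩
  by_cases hs : ∃ l ∈ s, l ≠ k
  · let u := Pi.single k (1 : R) ᵥ* ((g⁻¹ : SpecialLinearGroup ι R) : Matrix ι ι R)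
    have huv : u ⬝ᵥ (g • Pi.single k 1) = 1 := by
      rw [vecMul_dotProduct_eq, inv_smul_smul, single_one_dotProduct, Pi.single_eq_same]
    have hu (j : ι) (hj : j ∉ s) : u j = 0 := by
      have hkj : k ≠ j := fun h => hj (h ▸ hk)
      rw [← dotProduct_single_one u j, vecMul_dotProduct_eq, inv_smul_eq_iff.mpr (hg j hj).symm]
      simp [hkj]
    obtain ⟨h, hh, j, hj, hunit⟩ := exists_mem_elementarySubgroup_isUnit_smul_apply hu huv
    obtain ⟨h', hh', hone⟩ := exists_mem_elementarySubgroup_smul_apply_eq_one hj hunit hk hs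
    exact ⟨h' * h, mul_mem hh' hh, by rw [mul_smul, hone]⟩
  · push Not at hs
    refine ⟨1, one_mem _, ?_⟩
    rw [one_smul]
    exact smul_single_apply_eq_one fun j hjk => hg j fun hj => hjk (hs j hj)

theorem mem_elementarySubgroup_of_forall_smul_single (g : SpecialLinearGroup ι R)
    (hg : ∀ j ∉ s, g • (Pi.single j 1 : ι → R) = Pi.single j 1) : g ∈ elementarySubgroup R s := by
  induction s using Finset.induction_on generalizing g with
  | empty =>
    have hg1 : g = 1 := eq_of_forall_smul_single_eq fun j => by
      rw [hg j (Finset.notMem_empty j), one_smul]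
    exact hg1 ▸ one_mem _
  | insert k s _ ih =>
    obtain ⟨h, hh, hhk⟩ := exists_mem_elementarySubgroup_smul_smul_single
      (Finset.mem_insert_self k s) hg
    refine (Subgroup.mul_mem_cancel_left _ hh).mp
      (elementarySubgroup_mono (Finset.subset_insert k s) (ih _ fun j hj => ?_))
    rw [mul_smul]
    rcases eq_or_ne j k with rfl | hjk
    · exact hhk
    · have hj' : j ∉ insert k s := by simp [hjk, hj]
      rw [hg j hj', smul_single_of_mem_elementarySubgroup hh hj']

variable (ι R) in
theorem elementarySubgroup_univ_eq_top : elementarySubgroup R (Finset.univ : Finset ι) = ⊤ :=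
  eq_top_iff.mpr fun g _ => mem_elementarySubgroup_of_forall_smul_single g
    fun j hj => absurd (Finset.mem_univ j) hj

end EuclideanAlgorithm

section FiniteImages

variable {ι R G : Type*} [Fintype ι] [DecidableEq ι] [CommRing R] [Group G]
  {φ : SpecialLinearGroup ι R →* G}

/-- Every one-parameter group of elementary matrices `1 + a E_ij`, `a : R`, has a finite image
under `φ`. -/
def FiniteElementaryImages (φ : SpecialLinearGroup ι R →* G) : Prop :=
  ∀ i j, i ≠ j → (Set.range fun a : R => φ (transvec (Pi.single i a) (Pi.single j 1))).Finite

namespace FiniteElementaryImages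

theorem finite_setOf_transvec_single_right (hφ : FiniteElementaryImages φ) (m : ι) :
    {h | ∃ x : ι → R, x m = 0 ∧ φ (transvec x (Pi.single m 1)) = h}.Finite := by
  refine (finite_setOf_list_prod (Finset.univ.erase m).toList (A := fun i =>
    Set.range fun a : R => φ (transvec (Pi.single i a) (Pi.single m 1)))
    fun i hi => hφ i m (by simpa using hi)).subset ?_
  rintro _ ⟨x, hx, rfl⟩
  refine ⟨fun i => φ (transvec (Pi.single i (x i)) (Pi.single m 1)), fun i _ => ⟨x i, rfl⟩, ?_⟩
  have hsum : ∑ i ∈ Finset.univ.erase m, Pi.single i (x i) = x := by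
    rw [Finset.sum_erase _ (by rw [hx, Pi.single_zero]), Finset.univ_sum_single]
  conv_rhs => rw [← hsum]
  rw [transvec_sum_left, map_list_prod, List.map_map]
  · rfl
  · exact fun i hi => single_dotProduct_single_of_ne (Finset.ne_of_mem_erase hi) _ _

theorem finite_setOf_transvec_single_left (hφ : FiniteElementaryImages φ) (m : ι) :
    {h | ∃ w : ι → R, w m = 0 ∧ φ (transvec (Pi.single m 1) w) = h}.Finite := by
  refine (finite_setOf_list_prod (Finset.univ.erase m).toList (A := fun j =>
    Set.range fun a : R => φ (transvec (Pi.single m a) (Pi.single j 1)))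
    fun j hj => hφ m j (by simpa [eq_comm] using hj)).subset ?_
  rintro _ ⟨w, hw, rfl⟩
  refine ⟨fun j => φ (transvec (Pi.single m (w j)) (Pi.single j 1)), fun j _ => ⟨w j, rfl⟩, ?_⟩
  have hsum : ∑ j ∈ Finset.univ.erase m, Pi.single j (w j) = w := by
    rw [Finset.sum_erase _ (by rw [hw, Pi.single_zero]), Finset.univ_sum_single]
  conv_rhs => rw [← hsum]
  rw [transvec_sum_right, map_list_prod, List.map_map]
  · refine congrArg List.prod (List.map_congr_left fun j hj => ?_)
    have hmj : m ≠ j := (Finset.ne_of_mem_erase (Finset.mem_toList.mp hj)).symm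
    rw [Function.comp_apply, ← mul_one (w j), ← smul_eq_mul, Pi.single_smul', Pi.single_smul',
      transvec_smul_right (single_dotProduct_single_of_ne hmj _ _)]
  · exact fun j hj => single_dotProduct_single_of_ne (Finset.ne_of_mem_erase hj).symm _ _

theorem finite_setOf_transvec_of_apply_eq_zero (hφ : FiniteElementaryImages φ) (m : ι) :
    {h | ∃ x w : ι → R, w ⬝ᵥ x = 0 ∧ x m = 0 ∧ φ (transvec x w) = h}.Finite := by
  have hcol := hφ.finite_setOf_transvec_single_right m
  refine ((Set.Finite.image2 (⁅·, ·⁆) hcol (hφ.finite_setOf_transvec_single_left m)).mul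
    hcol).subset ?_
  rintro _ ⟨x, w, hwx, hx, rfl⟩
  let w' := w - w m • Pi.single m 1
  have hw'm : w' m = 0 := by simp [w']
  have hw'x : w' ⬝ᵥ x = 0 := by simp [w', sub_dotProduct, hwx, hx]
  have hmx : Pi.single m 1 ⬝ᵥ x = 0 := by rw [single_one_dotProduct, hx]
  have hsplit : transvec x w = ⁅transvec x (Pi.single m 1), transvec (Pi.single m 1) w'⁆ *
      transvec (w m • x) (Pi.single m 1) := by
    rw [commutator_transvec hmx (by rw [dotProduct_single_one, hw'm]) hw'x, single_one_dotProduct,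
      Pi.single_eq_same, one_smul, ← transvec_smul_right hmx,
      ← transvec_add_right hw'x (by rw [smul_dotProduct, hmx, smul_zero]), sub_add_cancel]
  rw [hsplit, map_mul, map_commutatorElement]
  exact Set.mul_mem_mul (Set.mem_image2_of_mem ⟨x, hx, rfl⟩ ⟨w', hw'm, rfl⟩)
    ⟨w m • x, by rw [Pi.smul_apply, hx, smul_zero], rfl⟩

end FiniteElementaryImages

-- The Koszul relations `w k • e l - w l • e k` span the vectors killed by a unimodular `w`, and
-- each of them vanishes at a third coordinate.
theorem sum_smul_koszul_relation_eq {u v w : ι → R} (hwv : w ⬝ᵥ v = 0) (hwu : w ⬝ᵥ u = 1) :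
    ∑ p : ι × ι, (v p.2 * u p.1) • (w p.1 • Pi.single p.2 1 - w p.2 • Pi.single p.1 1) = v := by
  have hterm (k l : ι) : (v l * u k) • (w k • Pi.single l 1 - w l • Pi.single k 1 : ι → R) =
      (w k * u k) • Pi.single l (v l) - (w l * v l) • Pi.single k (u k) := by
    ext m
    simp only [Pi.smul_apply, Pi.sub_apply, Pi.single_apply, smul_eq_mul]
    split_ifs <;> ring
  calc _ = ∑ k, ∑ l, ((w k * u k) • Pi.single l (v l) - (w l * v l) • Pi.single k (u k)) := by
        simp only [Fintype.sum_prod_type, hterm]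
    _ = (w ⬝ᵥ u) • v - (w ⬝ᵥ v) • u := by
        simp only [Finset.sum_sub_distrib, ← Finset.smul_sum, ← Finset.sum_smul,
          Finset.univ_sum_single, dotProduct]
    _ = v := by rw [hwv, hwu, one_smul, zero_smul, sub_zero]

theorem FiniteElementaryImages.finite_setOf_transvec_of_unimodular
    (hφ : FiniteElementaryImages φ) (hι : 3 ≤ Fintype.card ι) :
    {h | ∃ v w u : ι → R, w ⬝ᵥ v = 0 ∧ w ⬝ᵥ u = 1 ∧ φ (transvec v w) = h}.Finite := by
  choose third hthird using exists_ne_ne_of_three_le_card hι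
  refine (finite_setOf_list_prod (Finset.univ : Finset (ι × ι)).toList fun p _ =>
    hφ.finite_setOf_transvec_of_apply_eq_zero (third p.1 p.2)).subset ?_
  rintro _ ⟨v, w, u, hwv, hwu, rfl⟩
  let x (p : ι × ι) : ι → R :=
    (v p.2 * u p.1) • (w p.1 • Pi.single p.2 1 - w p.2 • Pi.single p.1 1)
  have hwx (p : ι × ι) : w ⬝ᵥ x p = 0 := by simp [x, mul_comm]
  have hx (p : ι × ι) : x p (third p.1 p.2) = 0 := by
    obtain ⟨h₁, h₂⟩ := hthird p.1 p.2
    simp [x, h₁, h₂]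
  refine ⟨fun p => φ (transvec (x p) w), fun p _ => ⟨x p, w, hwx p, hx p, rfl⟩, ?_⟩
  rw [← sum_smul_koszul_relation_eq hwv hwu, transvec_sum_left _ _ fun p _ => hwx p, map_list_prod,
    List.map_map]
  rfl

theorem FiniteElementaryImages.finite (hφ : FiniteElementaryImages φ)
    (hι : 3 ≤ Fintype.card ι) (hsurj : Function.Surjective φ)
    (hE : elementarySubgroup R (Finset.univ : Finset ι) = ⊤) [Group.IsPerfect G] : Finite G := by
  refine finite_of_isPerfect_of_finite_closure_eq_top
    (hφ.finite_setOf_transvec_of_unimodular hι) ?_ ?_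
  · rintro g' _ ⟨v, w, u, hwv, hwu, rfl⟩
    obtain ⟨g, rfl⟩ := hsurj g'
    refine ⟨g • v, w ᵥ* ((g⁻¹ : SpecialLinearGroup ι R) : Matrix ι ι R), g • u, ?_, ?_, ?_⟩
    · rw [vecMul_dotProduct_eq, inv_smul_smul, hwv]
    · rw [vecMul_dotProduct_eq, inv_smul_smul, hwu]
    · rw [← conj_transvec g hwv, map_mul, map_mul, map_inv]
  · rw [eq_top_iff, ← MonoidHom.range_eq_top_of_surjective φ hsurj, MonoidHom.range_eq_map, ← hE,
      elementarySubgroup, MonoidHom.map_closure]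
    refine Subgroup.closure_mono ?_
    rintro _ ⟨_, ⟨i, j, -, a, hij, rfl⟩, rfl⟩
    exact ⟨Pi.single i a, Pi.single j 1, Pi.single j 1, single_dotProduct_single_of_ne hij _ _,
      by simp, rfl⟩

end FiniteImages

section FiniteIndex

variable {ι R : Type*} [Fintype ι] [DecidableEq ι]

theorem isPerfect_of_elementarySubgroup_eq_top [CommRing R] (hι : 3 ≤ Fintype.card ι)
    (hE : elementarySubgroup R (Finset.univ : Finset ι) = ⊤) :
    Group.IsPerfect (SpecialLinearGroup ι R) := by
  rw [Group.isPerfect_def, eq_top_iff, ← hE, elementarySubgroup, Subgroup.closure_le]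
  rintro _ ⟨i, j, -, a, hij, rfl⟩
  obtain ⟨k, hki, hkj⟩ := exists_ne_ne_of_three_le_card hι i j
  have hcomm : ⁅transvec (Pi.single i a) (Pi.single k 1), transvec (Pi.single k 1)
      (Pi.single j 1)⁆ = transvec (Pi.single i a) (Pi.single j (1 : R)) := by
    rw [commutator_transvec (single_dotProduct_single_of_ne hki.symm _ _)
      (single_dotProduct_single_of_ne hkj _ _) (single_dotProduct_single_of_ne hij _ _),
      single_one_dotProduct, Pi.single_eq_same, one_smul]
  exact hcomm ▸ Subgroup.commutator_mem_commutator (Subgroup.mem_top _) (Subgroup.mem_top _)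

theorem exists_commutator_ne_one_of_notMem_center [CommRing R]
    (hE : elementarySubgroup R (Finset.univ : Finset ι) = ⊤) {h : SpecialLinearGroup ι R}
    (hh : h ∉ Subgroup.center (SpecialLinearGroup ι R)) :
    ∃ x w : ι → R, w ⬝ᵥ x = 0 ∧ ⁅h, transvec x w⁆ ≠ 1 := by
  by_contra! hcomm
  refine hh (Subgroup.mem_center_iff.mpr fun g => ?_)
  suffices elementarySubgroup R Finset.univ ≤ Subgroup.centralizer {h} from
    (Subgroup.mem_centralizer_singleton_iff.mp (this (hE ▸ Subgroup.mem_top g)))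
  rw [elementarySubgroup, Subgroup.closure_le]
  rintro _ ⟨i, j, -, a, hij, rfl⟩
  exact Subgroup.mem_centralizer_singleton_iff.mpr
    (commutatorElement_eq_one_iff_mul_comm.mp
      (hcomm _ _ (single_dotProduct_single_of_ne hij a 1))).symm

theorem containsTransvecMultiples_single_of_not_le_center [CommRing R] [IsDomain R]
    {N : Subgroup (SpecialLinearGroup ι R)} [N.Normal] (hι : 3 ≤ Fintype.card ι)
    (hE : elementarySubgroup R (Finset.univ : Finset ι) = ⊤)
    (hN : ¬ N ≤ Subgroup.center (SpecialLinearGroup ι R)) {i j : ι} (hij : i ≠ j) :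
    ContainsTransvecMultiples N (Pi.single i (1 : R)) (Pi.single j (1 : R)) := by
  obtain ⟨h, hhN, hh⟩ := SetLike.not_le_iff_exists.mp hN
  obtain ⟨a, b, hba, hg1⟩ := exists_commutator_ne_one_of_notMem_center hE hh
  obtain ⟨d, hd, hda, hdha⟩ := exists_ne_zero_dotProduct_eq_zero₂ hι a (h • a)
  have hgd (v : ι → R) : d ⬝ᵥ (⁅h, transvec a b⁆ • v) = d ⬝ᵥ v := by
    have hb : b ᵥ* ((h⁻¹ : SpecialLinearGroup ι R) : Matrix ι ι R) ⬝ᵥ (h • a) = 0 := by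
      rw [vecMul_dotProduct_eq, inv_smul_smul, hba]
    rw [commutatorElement_def, conj_transvec h hba, inv_transvec hba, mul_smul, transvec_smul hb,
      transvec_smul (by rw [dotProduct_neg, hba, neg_zero])]
    simp only [dotProduct_add, dotProduct_smul, dotProduct_neg, hda, hdha, neg_zero, smul_zero,
      add_zero]
  obtain ⟨x, w, hx, hw, hwx, hmem⟩ := exists_transvec_mem_of_forall_dotProduct_smul hι
    (commutator_mem_of_left_mem hhN _) hg1 hd hgd
  exact containsTransvecMultiples_single_of_transvec_mem hι hx hw hwx hmem hij

theorem ContainsTransvecMultiples.finite_range_mk [CommRing R] [Ring.HasFiniteQuotients R]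
    {N : Subgroup (SpecialLinearGroup ι R)} [N.Normal] {x w : ι → R}
    (h : ContainsTransvecMultiples N x w) (hwx : w ⬝ᵥ x = 0) :
    (Set.range fun a : R => QuotientGroup.mk' N (transvec (a • x) w)).Finite := by
  obtain ⟨q, hq, hN⟩ := h
  have : Finite (R ⧸ Ideal.span {q}) := Ring.HasFiniteQuotients.finiteQuotient
    (mt Ideal.span_singleton_eq_bot.mp hq)
  refine (Set.finite_range fun r : R ⧸ Ideal.span {q} =>
    QuotientGroup.mk' N (transvec (r.out • x) w)).subset ?_
  rintro _ ⟨a, rfl⟩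
  let r : R ⧸ Ideal.span {q} := Ideal.Quotient.mk _ a
  obtain ⟨c, hc⟩ : ∃ c, c * q = a - r.out := Ideal.mem_span_singleton'.mp
    (Ideal.Quotient.eq.mp r.out_eq'.symm)
  have hwx' (b : R) : w ⬝ᵥ (b • x) = 0 := by rw [dotProduct_smul, hwx, smul_zero]
  have ha : transvec (a • x) w = transvec ((c * q) • x) w * transvec (r.out • x) w := by
    rw [← transvec_add_left (hwx' _) (hwx' _), ← add_smul, hc, sub_add_cancel]
  have hker : QuotientGroup.mk' N (transvec ((c * q) • x) w) = 1 :=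
    (QuotientGroup.eq_one_iff _).mpr (hN c)
  exact ⟨r, by simp only [ha, map_mul, hker, one_mul]⟩

theorem finite_center_specialLinearGroup [CommRing R] [IsDomain R] :
    (Subgroup.center (SpecialLinearGroup ι R) : Set (SpecialLinearGroup ι R)).Finite :=
  have : NeZero (max (Fintype.card ι) 1) := ⟨by omega⟩
  have : Finite (Subgroup.center (SpecialLinearGroup ι R)) :=
    .of_equiv _ SpecialLinearGroup.center_equiv_rootsOfUnity.symm.toEquiv
  Set.toFinite _

theorem stmt_12_general [EuclideanDomain R] [Ring.HasFiniteQuotients R]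
    (hι : 3 ≤ Fintype.card ι) (N : Subgroup (SpecialLinearGroup ι R)) (hN : N.Normal) :
    (N : Set (SpecialLinearGroup ι R)).Finite ∨ N.FiniteIndex := by
  by_cases hcenter : N ≤ Subgroup.center (SpecialLinearGroup ι R)
  · exact .inl (finite_center_specialLinearGroup.subset hcenter)
  · right
    have hE := elementarySubgroup_univ_eq_top ι R
    have hfinite : FiniteElementaryImages (QuotientGroup.mk' N) := fun i j hij => by
      simpa only [← Pi.single_smul, smul_eq_mul, mul_one] using
        (containsTransvecMultiples_single_of_not_le_center hι hE hcenter hij).finite_range_mk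
          (single_dotProduct_single_of_ne hij 1 1)
    have := isPerfect_of_elementarySubgroup_eq_top hι hE
    have := hfinite.finite hι (QuotientGroup.mk'_surjective N) hE
    exact Subgroup.finiteIndex_of_finite_quotient

end FiniteIndex

/-- For `n ≥ 3`, every normal subgroup of `SL(n, ℤ)` is finite or of finite index. -/
theorem stmt_12 (n : ℕ) (hn : 3 ≤ n) (N : Subgroup (SpecialLinearGroup (Fin n) ℤ))
    (hN : N.Normal) :
    (N : Set (SpecialLinearGroup (Fin n) ℤ)).Finite ∨ N.FiniteIndex :=
  stmt_12_general (by rwa [Fintype.card_fin]) N hN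
end

section
/- Let n ≥ 5 be an integer and let H be a finite-index subgroup of SL(n, ℤ). Then every group homomorphism from H to GL(4, ℝ) has finite image. -/
open Matrix

/-!
In `SL(n, R)` the transvections `𝐞 i j`, `𝐞 j l` with `j ≠ i, l` satisfy Heisenberg relations of
rank `2 (n - 2)` with central element `𝐞 i l`. In a representation of dimension `d`, taking
determinants on an eigenspace of the central element shows that its eigenvalues are roots of unity
of order at most `d`, so that its `d!`-th power is unipotent.

If the central element `z` itself is unipotent and `z ≠ 1`, choose `u = (z - 1) v ≠ 0` fixed by `z`
and a common eigenvector of the generators `g`, with `g u = χ u`. The vectors `a v`, where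
`a = χ⁻¹ g - 1`, lie in `ker (z - 1)`, and the linear relations between them modulo `u` form an
isotropic subspace for the commutator pairing, so with `u` they span at least `n - 1` dimensions of
a proper subspace and `d ≥ n`. Hence for `d < n` suitable powers of all transvections act trivially.

The kernel therefore contains a normal subgroup `Q` with all transvections with entry in some
nonzero ideal `I`. Row and column operations with entries in `I` show that the image of the
principal congruence subgroup `Γ(I)` in `SL(n, R) ⧸ Q` commutes with all transvections, hence is
central. So `SL(n, R) ⧸ Q` is a perfect group with centre of finite index, and such a group is
finite by Schur's theorem.
-/

namespace SpecialLinearSuperrigidity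

open scoped commutatorElement

local notation "𝐞" => SpecialLinearGroup.transvection

section LinearAlgebra

open Module

variable {K V : Type*} [Field K] [AddCommGroup V] [Module K V] [FiniteDimensional K V]

lemma isUnit_det_restrict {f : End K V} (hf : IsUnit f) {W : Submodule K V}
    (hW : Set.MapsTo f W W) : IsUnit (LinearMap.det (f.restrict hW)) := by
  refine LinearMap.isUnit_det _ ((LinearMap.isUnit_iff_ker_eq_bot _).2 (LinearMap.ker_eq_bot.2 ?_))
  intro v w hvw
  exact Subtype.ext (((End.isUnit_iff f).1 hf).injective (congrArg Subtype.val hvw))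

lemma pow_finrank_eigenspace_eq_one {x y z : End K V} (hx : IsUnit x) (hy : IsUnit y)
    (hxy : x * y = z * (y * x)) (hzx : Commute z x) (hzy : Commute z y) (μ : K) :
    μ ^ finrank K (End.eigenspace z μ) = 1 := by
  have hxE := End.mapsTo_genEigenspace_of_comm hzx μ 1
  have hyE := End.mapsTo_genEigenspace_of_comm hzy μ 1
  have restrict_mul : x.restrict hxE * y.restrict hyE =
      μ • (y.restrict hyE * x.restrict hxE) := by
    ext v
    have hz : z (y (x v)) = μ • y (x v) := End.mem_eigenspace_iff.1 (hyE (hxE v.2))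
    exact (LinearMap.congr_fun hxy v).trans hz
  have det_eq := congrArg LinearMap.det restrict_mul
  rw [LinearMap.det_smul, map_mul, map_mul, mul_comm (LinearMap.det (y.restrict hyE))] at det_eq
  exact (((isUnit_det_restrict hx hxE).mul (isUnit_det_restrict hy hyE)).mul_eq_right).1 det_eq.symm

lemma eigenvalue_pow_factorial_finrank_eq_one {x y z : End K V} (hx : IsUnit x) (hy : IsUnit y)
    (hxy : x * y = z * (y * x)) (hzx : Commute z x) (hzy : Commute z y) {μ : K}
    (hμ : z.HasEigenvalue μ) : μ ^ (finrank K V).factorial = 1 := by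
  have finrank_pos : 0 < finrank K (End.eigenspace z μ) :=
    Nat.pos_of_ne_zero fun h ↦ hμ (Submodule.finrank_eq_zero.1 h)
  obtain ⟨c, hc⟩ := Nat.dvd_factorial finrank_pos (Submodule.finrank_le (End.eigenspace z μ))
  rw [hc, pow_mul, pow_finrank_eigenspace_eq_one hx hy hxy hzx hzy, one_pow]

lemma eigenvalue_pow_factorial_eq_one [IsAlgClosed K] {x y z : End K V} (hx : IsUnit x)
    (hy : IsUnit y) (hxy : x * y = z * (y * x)) (hzx : Commute z x) (hzy : Commute z y) {μ : K}
    (hμ : (z ^ (finrank K V).factorial).HasEigenvalue μ) : μ = 1 := by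
  rw [End.hasEigenvalue_iff_mem_spectrum,
    spectrum.map_pow_of_pos z (Nat.factorial_pos _)] at hμ
  obtain ⟨ν, hν, rfl⟩ := hμ
  exact eigenvalue_pow_factorial_finrank_eq_one hx hy hxy hzx hzy
    (End.hasEigenvalue_iff_mem_spectrum.2 hν)

lemma exists_common_eigenvector [IsAlgClosed K] {ι : Type*} (f : ι → End K V)
    {W : Submodule K V} (hW : W ≠ ⊥) (hfW : ∀ i, Set.MapsTo (f i) W W)
    (hf : ∀ i j, ∀ w ∈ W, f i (f j w) = f j (f i w)) :
    ∃ u ∈ W, u ≠ 0 ∧ ∃ χ : ι → K, ∀ i, f i u = χ i • u := by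
  let P : Submodule K V → Prop := fun U ↦ U ≠ ⊥ ∧ ∀ i, Set.MapsTo (f i) U U
  obtain ⟨U, hUW, ⟨hU, hfU⟩, hmin⟩ := exists_minimal_le_of_wellFoundedLT P W ⟨hW, hfW⟩
  -- On a minimal nonzero invariant subspace every `f i` is a scalar, as its eigenspaces are
  -- invariant under all `f j`.
  have scalar (i) : ∃ χ : K, ∀ u ∈ U, f i u = χ • u := by
    have : Nontrivial U := U.nontrivial_iff_ne_bot.2 hU
    obtain ⟨χ, hχ⟩ := End.exists_eigenvalue ((f i).restrict (hfU i))
    obtain ⟨v, hv⟩ := hχ.exists_hasEigenvector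
    have hfv : f i v = χ • (v : V) := congrArg Subtype.val hv.apply_eq_smul
    refine ⟨χ, fun u hu ↦ ?_⟩
    have eigen_invariant : P (U ⊓ End.eigenspace (f i) χ) := by
      refine ⟨(Submodule.ne_bot_iff _).2 ⟨v, ⟨v.2, End.mem_eigenspace_iff.2 hfv⟩,
        fun h ↦ hv.2 (Subtype.ext h)⟩, fun j w hw ↦ ⟨hfU j hw.1, End.mem_eigenspace_iff.2 ?_⟩⟩
      rw [hf i j w (hUW hw.1), End.mem_eigenspace_iff.1 hw.2, map_smul]
    exact End.mem_eigenspace_iff.1 (hmin eigen_invariant inf_le_left hu).2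
  choose χ hχ using scalar
  obtain ⟨u, hu, hu0⟩ := U.ne_bot_iff.1 hU
  exact ⟨u, hUW hu, hu0, χ, fun i ↦ hχ i u hu⟩

lemma two_mul_finrank_le_of_le_orthogonal {B : LinearMap.BilinForm K V} (hB : B.Nondegenerate)
    {W : Submodule K V} (hW : W ≤ B.orthogonal W) : 2 * finrank K W ≤ finrank K V := by
  have finrank_orthogonal := LinearMap.BilinForm.finrank_orthogonal hB W
  have finrank_mono := Submodule.finrank_mono hW
  have finrank_le := W.finrank_le
  omega

lemma finrank_add_four_le {E : Type*} [AddCommGroup E] [Module K E] [FiniteDimensional K E]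
    {B : LinearMap.BilinForm K E} (hB : B.Nondegenerate) {a : E →ₗ[K] End K V} {N : End K V}
    {u v : V} (hu : u ≠ 0) (hNv : N v = u) (hNu : N u = 0) (hau : ∀ c, a c u = 0)
    (hNa : ∀ c, N (a c v) = 0)
    (comm : ∀ c d, a c (a d v) - a d (a c v) = B c d • u) :
    finrank K E + 4 ≤ 2 * finrank K V := by
  let T : E × K →ₗ[K] V := (a.flip v).coprod (LinearMap.toSpanSingleton K V u)
  have T_apply (p : E × K) : T p = a p.1 v + p.2 • u := by simp [T]
  let π : LinearMap.ker T →ₗ[K] E := LinearMap.fst K E K ∘ₗ (LinearMap.ker T).subtype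
  have a_apply (p : LinearMap.ker T) : a (π p) v = -(p.1.2 • u) :=
    eq_neg_of_add_eq_zero_left ((T_apply p).symm.trans p.2)
  have π_injective : Function.Injective π := by
    refine (injective_iff_map_eq_zero π).2 fun p hp ↦ Subtype.ext (Prod.ext hp ?_)
    have := a_apply p
    rw [hp, map_zero, LinearMap.zero_apply, eq_comm, neg_eq_zero] at this
    exact (smul_eq_zero.1 this).resolve_right hu
  have isotropic : LinearMap.range π ≤ B.orthogonal (LinearMap.range π) := by
    rintro _ ⟨p, rfl⟩ _ ⟨q, rfl⟩
    simpa [a_apply, hau, hu] using (comm (π q) (π p)).symm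
  have range_le : LinearMap.range T ≤ LinearMap.ker N := by
    rintro _ ⟨p, rfl⟩
    simp [T_apply, hNa, hNu]
  have ker_ne_top : LinearMap.ker N ≠ ⊤ := fun h ↦
    hu (hNv ▸ LinearMap.mem_ker.1 (h ▸ Submodule.mem_top))
  have finrank_isotropic := two_mul_finrank_le_of_le_orthogonal hB isotropic
  rw [LinearMap.finrank_range_of_inj π_injective] at finrank_isotropic
  have finrank_range_le := Submodule.finrank_mono range_le
  have finrank_ker_lt := Submodule.finrank_lt ker_ne_top
  have rank_nullity := T.finrank_range_add_finrank_ker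
  rw [finrank_prod, finrank_self] at rank_nullity
  omega

lemma card_add_four_le {σ : Type*} [Fintype σ] [DecidableEq σ] {Ω : Matrix σ σ K}
    (hΩ : Ω.det ≠ 0) {a : σ → End K V} {N : End K V} {u v : V} (hu : u ≠ 0) (hNv : N v = u)
    (hNu : N u = 0) (hau : ∀ s, a s u = 0) (hNa : ∀ s, N (a s v) = 0)
    (comm : ∀ s t, a s (a t v) - a t (a s v) = Ω s t • u) :
    Fintype.card σ + 4 ≤ 2 * finrank K V := by
  have expand (c d : σ → K) :
      Fintype.linearCombination K a c (Fintype.linearCombination K a d v) =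
        ∑ s, ∑ t, (c s * d t) • a s (a t v) := by
    rw [Finset.sum_comm]
    simp [Fintype.linearCombination_apply, Finset.smul_sum, mul_smul, smul_comm (c _)]
  rw [← Module.finrank_fintype_fun_eq_card K]
  refine finrank_add_four_le (LinearMap.BilinForm.nondegenerate_toBilin'_of_det_ne_zero' Ω hΩ)
    (a := Fintype.linearCombination K a) hu hNv hNu (fun c ↦ ?_) (fun c ↦ ?_) fun c d ↦ ?_
  · simp [Fintype.linearCombination_apply, hau]
  · simp [Fintype.linearCombination_apply, hNa]
  · rw [expand, expand, Finset.sum_comm (f := fun s t ↦ (d s * c t) • a s (a t v)),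
      toBilin'_apply]
    simp only [← Finset.sum_sub_distrib, Finset.sum_smul, mul_comm (d _), ← smul_sub, comm,
      smul_smul, mul_right_comm]

end LinearAlgebra

section Heisenberg

variable {σ G : Type*} [Group G]

/-- The relations of the generators `g s` and the central element `z` in the integral Heisenberg
group of the form `Ω`. -/
structure HeisenbergRelations (Ω : Matrix σ σ ℤ) (g : σ → G) (z : G) : Prop where
  commute_center : ∀ s, Commute z (g s)
  commutator_eq : ∀ s t, ⁅g s, g t⁆ = z ^ Ω s t

lemma HeisenbergRelations.map {Ω : Matrix σ σ ℤ} {g : σ → G} {z : G}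
    (h : HeisenbergRelations Ω g z) {G' : Type*} [Group G'] (f : G →* G') :
    HeisenbergRelations Ω (f ∘ g) (f z) where
  commute_center s := (h.commute_center s).map f
  commutator_eq s t := by
    rw [Function.comp_apply, Function.comp_apply, ← map_commutatorElement, h.commutator_eq,
      map_zpow]

lemma HeisenbergRelations.subgroup {Ω : Matrix σ σ ℤ} {g : σ → G} {z : G}
    (h : HeisenbergRelations Ω g z) {N : Subgroup G} (hg : ∀ s, g s ∈ N) (hz : z ∈ N) :
    HeisenbergRelations Ω (fun s ↦ (⟨g s, hg s⟩ : N)) ⟨z, hz⟩ where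
  commute_center s := Subtype.ext (h.commute_center s)
  commutator_eq s t := Subtype.ext (h.commutator_eq s t)

lemma HeisenbergRelations.center_smul_comm {Ω : Matrix σ σ ℤ} {g : σ → G} {z : G}
    (h : HeisenbergRelations Ω g z) {α : Type*} [MulAction G α] (s : σ) (v : α) :
    z • g s • v = g s • z • v := by
  rw [smul_smul, (h.commute_center s).eq, mul_smul]

lemma HeisenbergRelations.smul_smul_eq {Ω : Matrix σ σ ℤ} {g : σ → G} {z : G}
    (h : HeisenbergRelations Ω g z) {α : Type*} [MulAction G α] (s t : σ) (v : α) :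
    g s • g t • v = z ^ Ω s t • g t • g s • v := by
  simp only [smul_smul, ← h.commutator_eq, commutatorElement_def]
  group

end Heisenberg

section HeisenbergRepresentation

open Module LinearMap

variable {K V : Type*} [Field K] [AddCommGroup V] [Module K V]

lemma range_sub_one_inf_ker_sub_one_ne_bot [FiniteDimensional K V] [IsAlgClosed K]
    {f : End K V} (hf : f ≠ 1)
    (hf1 : ∀ μ, f.HasEigenvalue μ → μ = 1) : range (f - 1) ⊓ ker (f - 1) ≠ ⊥ := by
  have hfR : Set.MapsTo f (range (f - 1)) (range (f - 1)) := by
    rintro _ ⟨w, rfl⟩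
    exact ⟨f w, by simp⟩
  have : Nontrivial (range (f - 1)) :=
    (Submodule.nontrivial_iff_ne_bot).2 fun h ↦ hf (sub_eq_zero.1 (range_eq_bot.1 h))
  obtain ⟨μ, hμ⟩ := End.exists_eigenvalue (f.restrict hfR)
  obtain ⟨v, hv⟩ := hμ.exists_hasEigenvector
  have hfv : f v = μ • (v : V) := congrArg Subtype.val hv.apply_eq_smul
  have hv0 : (v : V) ≠ 0 := fun h ↦ hv.2 (Subtype.ext h)
  obtain rfl := hf1 μ (End.hasEigenvalue_of_hasEigenvector ⟨End.mem_eigenspace_iff.2 hfv, hv0⟩)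
  exact (Submodule.ne_bot_iff _).2 ⟨v, ⟨v.2, by simp [hfv]⟩, hv0⟩

lemma zpow_smul_of_smul_eq_add {G V : Type*} [Group G] [AddCommGroup V] [DistribMulAction G V]
    {z : G} {u v : V} (hv : z • v = v + u) (hu : z • u = u) (m : ℤ) :
    z ^ m • v = v + m • u := by
  induction m with
  | zero => simp
  | succ m ih =>
    rw [← mul_self_zpow, mul_smul, ih, smul_add, smul_comm z, hv, hu, add_smul, one_smul]
    abel
  | pred m ih =>
    rw [← neg_add', add_comm, neg_add, _root_.zpow_add, _root_.zpow_neg_one, mul_smul, ih,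
      inv_smul_eq_iff, smul_add, smul_comm z, hv, hu, add_smul, neg_one_smul]
    abel

variable [FiniteDimensional K V] {σ : Type*}

lemma HeisenbergRelations.eigenvalue_center_pow_factorial_eq_one [IsAlgClosed K]
    {Ω : Matrix σ σ ℤ} {g : σ → GeneralLinearGroup K V} {z : GeneralLinearGroup K V}
    (h : HeisenbergRelations Ω g z) {s t : σ} (hst : Ω s t = 1) {μ : K}
    (hμ : End.HasEigenvalue ((z ^ (finrank K V).factorial : GeneralLinearGroup K V) : End K V) μ) :
    μ = 1 := by
  have hxy : g s * g t = z * (g t * g s) := by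
    rw [← zpow_one z, ← hst, ← h.commutator_eq, commutatorElement_def]
    group
  rw [Units.val_pow_eq_pow_val] at hμ
  exact eigenvalue_pow_factorial_eq_one (g s).isUnit (g t).isUnit (congrArg Units.val hxy)
    (congrArg Units.val (h.commute_center s)) (congrArg Units.val (h.commute_center t)) hμ

lemma HeisenbergRelations.exists_common_eigenvector_of_center_ne_one [IsAlgClosed K]
    {Ω : Matrix σ σ ℤ} {g : σ → GeneralLinearGroup K V} {z : GeneralLinearGroup K V}
    (h : HeisenbergRelations Ω g z) (hz : z ≠ 1)
    (hz1 : ∀ μ, End.HasEigenvalue (z : End K V) μ → μ = 1) :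
    ∃ u v : V, u ≠ 0 ∧ z • v = v + u ∧ z • u = u ∧ ∃ χ : σ → K, ∀ s, g s • u = χ s • u := by
  let N : End K V := z - 1
  have N_apply (w : V) : N w = z • w - w := rfl
  have mem_ker_N {w : V} : w ∈ ker N ↔ z • w = w := by rw [mem_ker, N_apply, sub_eq_zero]
  have commute_N (s) (w : V) : N (g s • w) = g s • N w := by
    rw [N_apply, N_apply, smul_sub, h.center_smul_comm]
  have invariant (s) : Set.MapsTo (g s : End K V) (range N ⊓ ker N : Submodule K V)
      (range N ⊓ ker N : Submodule K V) := by
    rintro _ ⟨⟨w, rfl⟩, hw⟩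
    exact ⟨⟨g s • w, commute_N s w⟩,
      (commute_N s _).trans ((congrArg (g s • ·) hw).trans (smul_zero _))⟩
  have commute_on (s t) (w : V) (hw : w ∈ range N ⊓ ker N) : g s • g t • w = g t • g s • w := by
    have z_smul : z • g t • g s • w = g t • g s • w + 0 := by
      rw [h.center_smul_comm, h.center_smul_comm, mem_ker_N.1 hw.2, add_zero]
    rw [h.smul_smul_eq, zpow_smul_of_smul_eq_add z_smul (smul_zero z), smul_zero, add_zero]
  obtain ⟨_, ⟨⟨v, rfl⟩, hNu⟩, hu, χ, hχ⟩ := exists_common_eigenvector (fun s ↦ (g s : End K V))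
    (range_sub_one_inf_ker_sub_one_ne_bot (fun hz' ↦ hz (Units.ext hz')) hz1) invariant commute_on
  exact ⟨_, v, hu, by rw [N_apply]; abel, mem_ker_N.1 hNu, χ, hχ⟩

theorem HeisenbergRelations.center_eq_one [IsAlgClosed K] [Fintype σ] [DecidableEq σ]
    {Ω : Matrix σ σ ℤ} (hΩ : (Ω.map (Int.cast : ℤ → K)).det ≠ 0)
    {g : σ → GeneralLinearGroup K V} {z : GeneralLinearGroup K V}
    (h : HeisenbergRelations Ω g z) (hz1 : ∀ μ, End.HasEigenvalue (z : End K V) μ → μ = 1)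
    (hσ : 2 * finrank K V < Fintype.card σ + 4) : z = 1 := by
  by_contra hz
  obtain ⟨u, v, hu, hzv, hzu, χ, hχ⟩ := h.exists_common_eigenvector_of_center_ne_one hz hz1
  have χ_ne_zero (s) : χ s ≠ 0 := fun h0 ↦ hu <| by
    rw [← smul_eq_zero_iff_eq (g s), hχ, h0, zero_smul]
  have swap (s t) : g s • g t • v - g t • g s • v = Ω s t • (χ s * χ t) • u := by
    have z_smul : z • g t • g s • v = g t • g s • v + (χ s * χ t) • u := by
      rw [h.center_smul_comm, h.center_smul_comm, hzv, smul_add, smul_add, hχ s,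
        smul_comm (g t) (χ s) u, hχ t, mul_smul]
    rw [h.smul_smul_eq, zpow_smul_of_smul_eq_add z_smul (by rw [smul_comm z, hzu]),
      add_sub_cancel_left]
  let a (s : σ) : End K V := (χ s)⁻¹ • (g s : End K V) - 1
  have a_apply (s) (w : V) : a s w = (χ s)⁻¹ • g s • w - w := rfl
  refine absurd (card_add_four_le hΩ (a := a) (N := (z : End K V) - 1) (u := u) (v := v)
    hu ?_ ?_ (fun s ↦ ?_) (fun s ↦ ?_) fun s t ↦ ?_) hσ.not_ge
  · exact sub_eq_of_eq_add' hzv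
  · exact sub_eq_zero.2 hzu
  · rw [a_apply, hχ, inv_smul_smul₀ (χ_ne_zero s), sub_self]
  · change z • a s v - a s v = 0
    rw [a_apply, smul_sub, smul_comm z, h.center_smul_comm, hzv, smul_add, smul_add, hχ,
      inv_smul_smul₀ (χ_ne_zero s)]
    abel
  · calc a s (a t v) - a t (a s v)
        = (χ s * χ t)⁻¹ • (g s • g t • v - g t • g s • v) := by
          simp only [a_apply, smul_sub, smul_comm (g _) (_ : K), smul_smul, mul_inv,
            mul_comm (χ t)⁻¹]
          abel
      _ = Ω.map (Int.cast : ℤ → K) s t • u := by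
          rw [swap, smul_comm _ (Ω s t), inv_smul_smul₀ (mul_ne_zero (χ_ne_zero s) (χ_ne_zero t)),
            map_apply, Int.cast_smul_eq_zsmul]

end HeisenbergRepresentation

section Transvections

variable {ι R : Type*} [Fintype ι] [DecidableEq ι] [CommRing R]

lemma transvection_mul_apply {i j : ι} (h : i ≠ j) (a : R) (g : SpecialLinearGroup ι R) (r c : ι) :
    (𝐞 h a * g) r c = g r c + if r = i then a * g j c else 0 := by
  split_ifs with hr
  · exact hr ▸ Matrix.transvection_mul_apply_same i j c a g.1
  · exact (Matrix.transvection_mul_apply_of_ne i j r c hr a g.1).trans (add_zero _).symm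

lemma mul_transvection_apply {i j : ι} (h : i ≠ j) (a : R) (g : SpecialLinearGroup ι R) (r c : ι) :
    (g * 𝐞 h a) r c = g r c + if c = j then a * g r i else 0 := by
  split_ifs with hc
  · exact hc ▸ Matrix.mul_transvection_apply_same i j r a g.1
  · exact (Matrix.mul_transvection_apply_of_ne i j r c hc a g.1).trans (add_zero _).symm

lemma transvection_pow {i j : ι} (h : i ≠ j) (a : R) (k : ℕ) : 𝐞 h a ^ k = 𝐞 h (k * a) := by
  induction k with
  | zero => simp
  | succ k ih =>
    rw [pow_succ, ih, ← SpecialLinearGroup.transvection_add, Nat.cast_succ, add_one_mul]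

lemma commute_transvection {i j k l : ι} (h : i ≠ j) (h' : k ≠ l) (hjk : j ≠ k) (hil : i ≠ l)
    (a b : R) : Commute (𝐞 h a) (𝐞 h' b) := by
  apply Subtype.ext
  simp only [Matrix.SpecialLinearGroup.coe_mul, SpecialLinearGroup.transvection_coe, mul_add,
    mul_one, add_mul, one_mul, single_mul_single_of_ne _ _ _ _ hjk, add_zero,
    single_mul_single_of_ne _ _ _ _ hil.symm]
  abel

lemma commutator_transvection {i j l : ι} (h : i ≠ j) (h' : j ≠ l) (hil : i ≠ l) (a b : R) :
    ⁅𝐞 h a, 𝐞 h' b⁆ = 𝐞 hil (a * b) := by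
  rw [commutatorElement_def, mul_inv_eq_iff_eq_mul, mul_inv_eq_iff_eq_mul]
  apply Subtype.ext
  simp only [Matrix.SpecialLinearGroup.coe_mul, SpecialLinearGroup.transvection_coe, mul_add,
    mul_one, add_mul, one_mul, single_mul_single_same, single_mul_single_of_ne _ _ _ _ h'.symm,
    add_zero, single_mul_single_of_ne _ _ _ _ hil.symm]
  abel

lemma exists_mul_eq_add_col {T : Subgroup (SpecialLinearGroup ι R)} {k : ι} {t : Finset ι}
    (hk : k ∉ t) {c : ι → R} (hT : ∀ i ∈ t, ∀ h : i ≠ k, 𝐞 h (c i) ∈ T) :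
    ∃ u ∈ T, ∀ (g : SpecialLinearGroup ι R) (r j),
      (u * g) r j = g r j + if r ∈ t then c r * g k j else 0 := by
  induction t using Finset.induction_on with
  | empty => exact ⟨1, one_mem _, by simp⟩
  | insert i t hi ih =>
    rw [Finset.mem_insert, not_or] at hk
    obtain ⟨u, hu, mul_u⟩ := ih hk.2 fun i hi ↦ hT i (Finset.mem_insert_of_mem hi)
    refine ⟨𝐞 (Ne.symm hk.1) (c i) * u,
      mul_mem (hT i (Finset.mem_insert_self _ _) _) hu, fun g r j ↦ ?_⟩
    rw [mul_assoc, transvection_mul_apply, mul_u, mul_u]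
    by_cases hr : r = i <;> simp [hr, hi, hk.2]

lemma exists_mul_eq_add_row {T : Subgroup (SpecialLinearGroup ι R)} {k : ι} {t : Finset ι}
    (hk : k ∉ t) {c : ι → R} (hT : ∀ j ∈ t, ∀ h : k ≠ j, 𝐞 h (c j) ∈ T) :
    ∃ u ∈ T, ∀ (g : SpecialLinearGroup ι R) (r j),
      (g * u) r j = g r j + if j ∈ t then c j * g r k else 0 := by
  induction t using Finset.induction_on with
  | empty => exact ⟨1, one_mem _, by simp⟩
  | insert i t hi ih =>
    rw [Finset.mem_insert, not_or] at hk
    obtain ⟨u, hu, mul_u⟩ := ih hk.2 fun i hi ↦ hT i (Finset.mem_insert_of_mem hi)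
    refine ⟨u * 𝐞 hk.1 (c i),
      mul_mem hu (hT i (Finset.mem_insert_self _ _) _), fun g r j ↦ ?_⟩
    rw [← mul_assoc, mul_transvection_apply, mul_u, mul_u]
    by_cases hj : j = i <;> simp [hj, hi, hk.2]

lemma mul_apply_of_row_eq_one {g : SpecialLinearGroup ι R} {r : ι}
    (hg : ∀ j, g r j = (1 : Matrix ι ι R) r j) (x : SpecialLinearGroup ι R) (c : ι) :
    (g * x) r c = x r c := by
  calc (g * x) r c = ∑ j, g r j * x j c := mul_apply
    _ = ∑ j, (1 : Matrix ι ι R) r j * x j c := by simp only [hg]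
    _ = x r c := by rw [← mul_apply, one_mul]

lemma mul_apply_of_col_eq_one {g : SpecialLinearGroup ι R} {c : ι}
    (hg : ∀ i, g i c = (1 : Matrix ι ι R) i c) (x : SpecialLinearGroup ι R) (r : ι) :
    (x * g) r c = x r c := by
  calc (x * g) r c = ∑ i, x r i * g i c := mul_apply
    _ = ∑ i, x r i * (1 : Matrix ι ι R) i c := by simp only [hg]
    _ = x r c := by rw [← mul_apply, mul_one]

/-- The copy of `SL(s, R)` inside `SL(ι, R)`: the matrices that differ from the identity only in
the `s × s` block. -/
def blockSubgroup (R : Type*) [CommRing R] (s : Set ι) : Subgroup (SpecialLinearGroup ι R) where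
  carrier := {g | ∀ i j, i ∉ s ∨ j ∉ s → g i j = (1 : Matrix ι ι R) i j}
  one_mem' _ _ _ := rfl
  mul_mem' := by
    rintro x y hx hy i j (hi | hj)
    · rw [mul_apply_of_row_eq_one fun j ↦ hx i j (.inl hi), hy i j (.inl hi)]
    · rw [mul_apply_of_col_eq_one fun i ↦ hy i j (.inr hj), hx i j (.inr hj)]
  inv_mem' := by
    rintro x hx i j (hi | hj)
    · rw [← mul_apply_of_row_eq_one (fun j ↦ hx i j (.inl hi)) x⁻¹, mul_inv_cancel]; rfl
    · rw [← mul_apply_of_col_eq_one (fun i ↦ hx i j (.inr hj)) x⁻¹, inv_mul_cancel]; rfl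

/-- The subgroup generated by the transvections with both indices in `s`. -/
def elementarySubgroup (R : Type*) [CommRing R] (s : Set ι) : Subgroup (SpecialLinearGroup ι R) :=
  Subgroup.closure {x | ∃ i ∈ s, ∃ j ∈ s, ∃ (h : i ≠ j) (a : R), x = 𝐞 h a}

lemma transvection_mem_elementarySubgroup {s : Set ι} {i j : ι} (hi : i ∈ s) (hj : j ∈ s)
    (h : i ≠ j) (a : R) : 𝐞 h a ∈ elementarySubgroup R s :=
  Subgroup.subset_closure ⟨i, hi, j, hj, h, a, rfl⟩

lemma elementarySubgroup_le_iff {s : Set ι} {T : Subgroup (SpecialLinearGroup ι R)} :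
    elementarySubgroup R s ≤ T ↔ ∀ i ∈ s, ∀ j ∈ s, ∀ (h : i ≠ j) (a : R), 𝐞 h a ∈ T := by
  refine (Subgroup.closure_le _).trans ⟨fun hT i hi j hj h a ↦ hT ⟨i, hi, j, hj, h, a, rfl⟩, ?_⟩
  rintro hT _ ⟨i, hi, j, hj, h, a, rfl⟩
  exact hT i hi j hj h a

lemma elementarySubgroup_mono {s t : Set ι} (hst : s ⊆ t) :
    elementarySubgroup R s ≤ elementarySubgroup R t :=
  elementarySubgroup_le_iff.2 fun _ hi _ hj ↦
    transvection_mem_elementarySubgroup (hst hi) (hst hj)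

lemma elementarySubgroup_le_blockSubgroup (s : Set ι) :
    elementarySubgroup R s ≤ blockSubgroup R s := by
  refine elementarySubgroup_le_iff.2 fun i hi j hj h a r c hrc ↦ ?_
  rw [SpecialLinearGroup.transvection_coe, Matrix.add_apply, single_apply_of_ne, add_zero]
  rintro ⟨rfl, rfl⟩
  exact hrc.elim (· hi) (· hj)

lemma eq_one_of_mem_blockSubgroup_singleton {k : ι} {g : SpecialLinearGroup ι R}
    (hg : g ∈ blockSubgroup R {k}) : g = 1 := by
  have apply_of_ne {i j : ι} (h : i ≠ k ∨ j ≠ k) : g i j = (1 : Matrix ι ι R) i j := hg i j h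
  have diagonal : (g : Matrix ι ι R) = Matrix.diagonal fun i ↦ g i i := by
    ext i j
    by_cases hij : i = j
    · simp [hij]
    · rw [diagonal_apply_ne _ hij, apply_of_ne, one_apply_ne hij]
      by_contra! h
      exact hij (h.1.trans h.2.symm)
  have apply_self : g k k = 1 := by
    have := g.det_coe
    rwa [diagonal, det_diagonal, Finset.prod_eq_single k
      (fun i _ hi ↦ by rw [apply_of_ne (.inl hi), one_apply_eq]) (by simp)] at this
  ext i j
  by_cases h : i = k ∧ j = k
  · rw [h.1, h.2, apply_self]
    exact (one_apply_eq k).symm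
  · exact apply_of_ne (not_and_or.1 h)

lemma sum_mul_inv_apply (g : SpecialLinearGroup ι R) (k : ι) : ∑ j, g k j * g⁻¹ j k = 1 :=
  calc ∑ j, g k j * g⁻¹ j k = (g * g⁻¹) k k := mul_apply.symm
    _ = (1 : Matrix ι ι R) k k := by rw [mul_inv_cancel]; rfl
    _ = 1 := one_apply_eq k

lemma exists_mul_row_eq_one {k l : ι} (h : k ≠ l) {g : SpecialLinearGroup ι R}
    (hg : ∀ j, j ≠ l → g k j = 0) :
    ∃ x ∈ elementarySubgroup R {k, l}, ∀ j, (g * x) k j = (1 : Matrix ι ι R) k j := by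
  have hy : g k l * g⁻¹ l k = 1 := by
    have := sum_mul_inv_apply g k
    rwa [Finset.sum_eq_single l (fun j _ hj ↦ by rw [hg j hj, zero_mul]) (by simp)] at this
  refine ⟨𝐞 h.symm (g⁻¹ l k) * 𝐞 h (-g k l),
    mul_mem (transvection_mem_elementarySubgroup (by simp) (by simp) _ _)
      (transvection_mem_elementarySubgroup (by simp) (by simp) _ _), fun j ↦ ?_⟩
  simp only [← mul_assoc, mul_transvection_apply, if_true, hg k h]
  rcases eq_or_ne j l with rfl | hjl
  · rw [one_apply_ne h, if_pos rfl, if_neg h.symm]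
    linear_combination -g k j * hy
  rcases eq_or_ne j k with rfl | hjk
  · rw [one_apply_eq, if_pos rfl, if_neg hjl, hg j hjl]
    linear_combination hy
  · rw [one_apply_ne hjk.symm, if_neg hjk, if_neg hjl, hg j hjl, add_zero, add_zero]

lemma exists_mul_mem_blockSubgroup {k : ι} {t : Finset ι} (hk : k ∉ t)
    {g : SpecialLinearGroup ι R} (hg : g ∈ blockSubgroup R (insert k t : Set ι))
    (hrow : ∀ j, g k j = (1 : Matrix ι ι R) k j) :
    ∃ u ∈ elementarySubgroup R (Set.univ : Set ι), u * g ∈ blockSubgroup R (t : Set ι) := by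
  obtain ⟨u, hu, mul_u⟩ := exists_mul_eq_add_col (c := fun i ↦ -g i k) hk fun i _ h ↦
    transvection_mem_elementarySubgroup (Set.mem_univ i) (Set.mem_univ k) h (-g i k)
  refine ⟨u, hu, fun i j hij ↦ ?_⟩
  rw [mul_u, hrow]
  rcases eq_or_ne j k with rfl | hjk
  · rw [one_apply_eq, mul_one]
    split_ifs with hi
    · rw [add_neg_cancel, one_apply_ne (ne_of_mem_of_not_mem hi hk)]
    · rw [add_zero]
      rcases eq_or_ne i j with rfl | hij
      · exact hrow i
      · exact hg i j (.inl (by simp [hij, hi]))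
  · rw [one_apply_ne hjk.symm, mul_zero, ite_self, add_zero]
    rcases eq_or_ne i k with rfl | hik
    · exact hrow j
    · exact hg i j (by simpa [hik, hjk] using hij)

end Transvections

section Euclidean

variable {ι R : Type*} [Fintype ι] [DecidableEq ι] [EuclideanDomain R]

lemma exists_mul_apply_eq_zero {i j : ι} (h : i ≠ j) (r : ι) (g : SpecialLinearGroup ι R) :
    ∃ x ∈ elementarySubgroup R {i, j}, (g * x) r j = 0 := by
  induction hb : g r j using (EuclideanDomain.r_wellFounded (R := R)).induction generalizing g with
  | h b ih =>
    subst hb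
    by_cases hb : g r j = 0
    · exact ⟨1, one_mem _, by rwa [mul_one]⟩
    let y : SpecialLinearGroup ι R := 𝐞 h.symm (-(g r i / g r j) - 1) * 𝐞 h 1
    have hy : y ∈ elementarySubgroup R {i, j} :=
      mul_mem (transvection_mem_elementarySubgroup (by simp) (by simp) _ _)
        (transvection_mem_elementarySubgroup (by simp) (by simp) _ _)
    have apply_y : (g * y) r j = g r i % g r j := by
      simp only [y, ← mul_assoc, mul_transvection_apply, h.symm, if_true, if_false,
        EuclideanDomain.mod_eq_sub_mul_div]
      ring
    obtain ⟨x, hx, apply_x⟩ := ih _ (apply_y ▸ EuclideanDomain.mod_lt (g r i) hb) (g * y) rfl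
    exact ⟨y * x, mul_mem hy hx, by rwa [← mul_assoc]⟩

lemma exists_mul_apply_eq_zero_of_mem {k : ι} {t : Finset ι} (hk : k ∉ t) (r : ι)
    (g : SpecialLinearGroup ι R) :
    ∃ x ∈ elementarySubgroup R (insert k t : Set ι), ∀ j ∈ t, (g * x) r j = 0 := by
  induction t using Finset.induction_on with
  | empty => exact ⟨1, one_mem _, by simp⟩
  | insert j t hj ih =>
    rw [Finset.mem_insert, not_or] at hk
    obtain ⟨x, hx, apply_x⟩ := ih hk.2
    obtain ⟨y, hy, apply_y⟩ := exists_mul_apply_eq_zero hk.1 r (g * x)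
    refine ⟨x * y, mul_mem (elementarySubgroup_mono ?_ hx) (elementarySubgroup_mono ?_ hy), ?_⟩
    · exact Set.insert_subset_insert (Finset.coe_subset.2 (Finset.subset_insert j t))
    · simp [Set.insert_subset_iff]
    · rw [← mul_assoc, Finset.forall_mem_insert]
      refine ⟨apply_y, fun i hi ↦ ?_⟩
      have hi' : i ∉ ({k, j} : Set ι) := by
        rintro (rfl | rfl)
        exacts [hk.2 hi, hj hi]
      rw [mul_apply_of_col_eq_one fun l ↦ elementarySubgroup_le_blockSubgroup _ hy l i (.inr hi'),
        apply_x i hi]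

lemma blockSubgroup_le_elementarySubgroup {s : Finset ι} (hs : s.Nonempty) :
    blockSubgroup R (s : Set ι) ≤ elementarySubgroup R Set.univ := by
  have le_univ (t : Set ι) : elementarySubgroup R t ≤ elementarySubgroup R Set.univ :=
    elementarySubgroup_mono t.subset_univ
  induction hs using Finset.Nonempty.cons_induction with
  | singleton k =>
    intro g hg
    rw [Finset.coe_singleton] at hg
    exact eq_one_of_mem_blockSubgroup_singleton hg ▸ one_mem _
  | cons k t hk ht ih =>
    rw [Finset.coe_cons]
    intro g hg
    obtain ⟨l, hl⟩ := ht
    have hlk : l ≠ k := ne_of_mem_of_not_mem hl hk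
    obtain ⟨x, hx, hx_row⟩ :=
      exists_mul_apply_eq_zero_of_mem ((insert k t).notMem_erase l) k g
    rw [← Finset.coe_insert, Finset.insert_erase (Finset.mem_insert_of_mem hl),
      Finset.coe_insert] at hx
    have hgx := mul_mem hg (elementarySubgroup_le_blockSubgroup _ hx)
    have gx_row (j : ι) (hj : j ≠ l) : (g * x) k j = 0 := by
      by_cases hjs : j ∈ insert k t
      · exact hx_row j (Finset.mem_erase.2 ⟨hj, hjs⟩)
      · rw [hgx k j (.inr (by simpa using hjs)), one_apply_ne]
        rintro rfl
        exact hjs (Finset.mem_insert_self _ _)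
    obtain ⟨y, hy, gxy_row⟩ := exists_mul_row_eq_one hlk.symm gx_row
    have hy' : y ∈ elementarySubgroup R (insert k t : Set ι) :=
      elementarySubgroup_mono (by simpa [Set.insert_subset_iff] using .inr hl) hy
    obtain ⟨u, hu, hugxy⟩ := exists_mul_mem_blockSubgroup hk
      (mul_mem hgx (elementarySubgroup_le_blockSubgroup _ hy')) gxy_row
    rw [← Subgroup.mul_mem_cancel_right _ (le_univ _ hx),
      ← Subgroup.mul_mem_cancel_right _ (le_univ _ hy), ← Subgroup.mul_mem_cancel_left _ hu]
    exact ih hugxy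

variable (ι R) in
lemma elementarySubgroup_univ_eq_top [Nonempty ι] :
    elementarySubgroup R (Set.univ : Set ι) = ⊤ := by
  rw [eq_top_iff]
  intro g _
  exact blockSubgroup_le_elementarySubgroup Finset.univ_nonempty fun i j hij ↦ by simp at hij

lemma eq_top_of_transvection_mem {T : Subgroup (SpecialLinearGroup ι R)} (k : ι)
    (hcol : ∀ i (h : i ≠ k) (a : R), 𝐞 h a ∈ T) (hrow : ∀ i (h : k ≠ i) (a : R), 𝐞 h a ∈ T) :
    T = ⊤ := by
  have : Nonempty ι := ⟨k⟩
  rw [eq_top_iff, ← elementarySubgroup_univ_eq_top ι R, elementarySubgroup_le_iff]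
  intro i _ j _ h a
  rcases eq_or_ne i k with rfl | hik
  · exact hrow j h a
  rcases eq_or_ne j k with rfl | hjk
  · exact hcol i h a
  rw [← mul_one a, ← commutator_transvection hik hjk.symm h, commutatorElement_def]
  exact mul_mem (mul_mem (mul_mem (hcol i hik a) (hrow j hjk.symm 1))
    (inv_mem (hcol i hik a))) (inv_mem (hrow j hjk.symm 1))

lemma isPerfect_specialLinearGroup (hι : 3 ≤ Fintype.card ι) :
    Group.IsPerfect (SpecialLinearGroup ι R) := by
  have : Nonempty ι := Fintype.card_pos_iff.1 (by omega)
  rw [Group.isPerfect_def, eq_top_iff, ← elementarySubgroup_univ_eq_top ι R,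
    elementarySubgroup_le_iff]
  intro i _ l _ h a
  obtain ⟨j, hj⟩ : ∃ j, j ∉ ({i, l} : Finset ι) :=
    (Finset.exists_mem_notMem_of_card_lt_card
      (Finset.card_le_two.trans_lt (hι : 2 < Finset.univ.card))).imp fun _ ↦ And.right
  simp only [Finset.mem_insert, Finset.mem_singleton, not_or] at hj
  rw [← mul_one a, ← commutator_transvection (Ne.symm hj.1) hj.2 h]
  exact Subgroup.commutator_mem_commutator (Subgroup.mem_top _) (Subgroup.mem_top _)

end Euclidean

section Center

variable {G : Type*} [Group G]

lemma inv_mul_mul_mem_center_iff {g x : G} :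
    x⁻¹ * g * x ∈ Subgroup.center G ↔ g ∈ Subgroup.center G := by
  rw [Subgroup.Normal.mem_comm_iff inferInstance, mul_inv_cancel_left]

lemma commutatorElement_mul_left_of_mem_center {z : G} (hz : z ∈ Subgroup.center G) (x y : G) :
    ⁅x * z, y⁆ = ⁅x, y⁆ := by
  rw [commutatorElement_def, commutatorElement_def, _root_.mul_inv_rev, mul_assoc x z y,
    ← Subgroup.mem_center_iff.1 hz y]
  group

lemma commutatorElement_mul_right_of_mem_center {z : G} (hz : z ∈ Subgroup.center G) (x y : G) :
    ⁅x, y * z⁆ = ⁅x, y⁆ := by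
  rw [← commutatorElement_inv, commutatorElement_mul_left_of_mem_center hz, commutatorElement_inv]

instance [(Subgroup.center G).FiniteIndex] : Finite (commutatorSet G) := by
  refine (Set.finite_range fun p : (G ⧸ Subgroup.center G) × (G ⧸ Subgroup.center G) ↦
    ⁅p.1.out, p.2.out⁆).subset ?_
  rintro _ ⟨x, y, rfl⟩
  obtain ⟨⟨u, hu⟩, hxu⟩ := QuotientGroup.mk_out_eq_mul (Subgroup.center G) x
  obtain ⟨⟨v, hv⟩, hyv⟩ := QuotientGroup.mk_out_eq_mul (Subgroup.center G) y
  refine ⟨(x, y), ?_⟩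
  simp only [hxu, hyv]
  rw [commutatorElement_mul_left_of_mem_center hu, commutatorElement_mul_right_of_mem_center hv]

lemma finite_of_isPerfect_of_finiteIndex_center [Group.IsPerfect G]
    [(Subgroup.center G).FiniteIndex] : Finite G :=
  have : Finite (⊤ : Subgroup G) := Group.IsPerfect.commutator_eq_top (G := G) ▸ inferInstance
  Finite.of_equiv _ Subgroup.topEquiv.toEquiv

end Center

section Congruence

variable {ι R : Type*} [Fintype ι] [DecidableEq ι]

/-- The principal congruence subgroup `Γ(I)` of `SL(ι, R)`, the kernel of reduction modulo `I`. -/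
def principalCongruenceSubgroup (ι : Type*) [Fintype ι] [DecidableEq ι] {R : Type*} [CommRing R]
    (I : Ideal R) : Subgroup (SpecialLinearGroup ι R) :=
  (SpecialLinearGroup.map (Ideal.Quotient.mk I)).ker

section CommRing

variable [CommRing R] {I : Ideal R}

instance : (principalCongruenceSubgroup ι I).Normal :=
  MonoidHom.normal_ker _

instance [Finite (R ⧸ I)] : (principalCongruenceSubgroup ι I).FiniteIndex :=
  have : Finite (SpecialLinearGroup ι (R ⧸ I)) := inferInstance
  Subgroup.finiteIndex_ker _

lemma mem_principalCongruenceSubgroup_iff {g : SpecialLinearGroup ι R} :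
    g ∈ principalCongruenceSubgroup ι I ↔ ∀ i j, g i j - (1 : Matrix ι ι R) i j ∈ I := by
  rw [principalCongruenceSubgroup, MonoidHom.mem_ker, Matrix.SpecialLinearGroup.ext_iff]
  refine forall₂_congr fun i j ↦ ?_
  rw [← Ideal.Quotient.eq_zero_iff_mem, map_sub, sub_eq_zero]
  refine Eq.congr rfl (Eq.symm ?_)
  exact congrFun₂ (map_one (Ideal.Quotient.mk I).mapMatrix) i j

lemma apply_mem_of_mem_principalCongruenceSubgroup {g : SpecialLinearGroup ι R}
    (hg : g ∈ principalCongruenceSubgroup ι I) {i j : ι} (h : i ≠ j) : g i j ∈ I := by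
  have := mem_principalCongruenceSubgroup_iff.1 hg i j
  rwa [one_apply_ne h, sub_zero] at this

lemma transvection_mem_principalCongruenceSubgroup {i j : ι} (h : i ≠ j) {a : R} (ha : a ∈ I) :
    𝐞 h a ∈ principalCongruenceSubgroup ι I := by
  refine mem_principalCongruenceSubgroup_iff.2 fun r c ↦ ?_
  rw [SpecialLinearGroup.transvection_coe, Matrix.add_apply, add_sub_cancel_left,
    single_apply]
  split_ifs
  exacts [ha, I.zero_mem]

lemma inv_mul_mul_mem_principalCongruenceSubgroup {g x : SpecialLinearGroup ι R}
    (hg : g ∈ principalCongruenceSubgroup ι I) : x⁻¹ * g * x ∈ principalCongruenceSubgroup ι I := by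
  simpa using Subgroup.Normal.conj_mem inferInstance g hg x⁻¹

lemma mem_blockSubgroup_compl_singleton_iff {k : ι} {g : SpecialLinearGroup ι R} :
    g ∈ blockSubgroup R {k}ᶜ ↔
      (∀ j, g k j = (1 : Matrix ι ι R) k j) ∧ ∀ i, g i k = (1 : Matrix ι ι R) i k := by
  refine ⟨fun hg ↦ ⟨fun j ↦ hg k j (.inl (by simp)), fun i ↦ hg i k (.inr (by simp))⟩, ?_⟩
  rintro ⟨hrow, hcol⟩ i j (hi | hj)
  · rw [Set.notMem_compl_iff.1 hi, hrow]
  · rw [Set.notMem_compl_iff.1 hj, hcol]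

variable {Q : Subgroup (SpecialLinearGroup ι R)} [Q.Normal]

lemma commute_mk_transvection_col (hQ : ∀ ⦃i j⦄ (h : i ≠ j), ∀ a ∈ I, 𝐞 h a ∈ Q)
    {g : SpecialLinearGroup ι R} (hg : g ∈ principalCongruenceSubgroup ι I) {i k : ι}
    (hgk : g ∈ blockSubgroup R {k}ᶜ) (h : i ≠ k) (a : R) :
    Commute (g : SpecialLinearGroup ι R ⧸ Q) (𝐞 h a) := by
  obtain ⟨hrow, hcol⟩ := mem_blockSubgroup_compl_singleton_iff.1 hgk
  obtain ⟨u, hu, mul_u⟩ := exists_mul_eq_add_col (T := Q) (t := {k}ᶜ) (k := k) (by simp)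
    (c := fun r ↦ a * (g r i - (1 : Matrix ι ι R) r i)) fun r _ hr ↦
      hQ hr _ (I.mul_mem_left a (mem_principalCongruenceSubgroup_iff.1 hg r i))
  have mul_transvection : u * (𝐞 h a * g) = g * 𝐞 h a := by
    ext r c
    simp only [mul_u, transvection_mul_apply, mul_transvection_apply, hrow, h.symm, if_false,
      add_zero, Finset.mem_compl, Finset.mem_singleton]
    rcases eq_or_ne c k with rfl | hc
    · rcases eq_or_ne r c with rfl | hr
      · simp [h.symm, hrow, one_apply_ne h.symm]
      · rcases eq_or_ne r i with rfl | hri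
        · simp only [one_apply_eq, if_true, hr, not_false_eq_true]
          ring
        · simp [hr, hri, one_apply_ne hri]
    · simp [hc, one_apply_ne hc.symm]
  calc (g * 𝐞 h a : SpecialLinearGroup ι R ⧸ Q)
      = u * (𝐞 h a * g) := congrArg ((↑) : _ → SpecialLinearGroup ι R ⧸ Q) mul_transvection.symm
    _ = 𝐞 h a * g := by rw [(QuotientGroup.eq_one_iff u).2 hu, one_mul]

lemma commute_mk_transvection_row (hQ : ∀ ⦃i j⦄ (h : i ≠ j), ∀ a ∈ I, 𝐞 h a ∈ Q)
    {g : SpecialLinearGroup ι R} (hg : g ∈ principalCongruenceSubgroup ι I) {i k : ι}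
    (hgk : g ∈ blockSubgroup R {k}ᶜ) (h : k ≠ i) (a : R) :
    Commute (g : SpecialLinearGroup ι R ⧸ Q) (𝐞 h a) := by
  obtain ⟨hrow, hcol⟩ := mem_blockSubgroup_compl_singleton_iff.1 hgk
  obtain ⟨u, hu, mul_u⟩ := exists_mul_eq_add_row (T := Q) (t := {k}ᶜ) (k := k) (by simp)
    (c := fun c ↦ -(a * (g i c - (1 : Matrix ι ι R) i c))) fun c _ hc ↦
      hQ hc _ (I.neg_mem (I.mul_mem_left a (mem_principalCongruenceSubgroup_iff.1 hg i c)))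
  have mul_transvection : g * 𝐞 h a = 𝐞 h a * g * u := by
    have col_k (r) : (𝐞 h a * g) r k = (1 : Matrix ι ι R) r k := by
      rw [transvection_mul_apply, hcol, hcol, one_apply_ne h.symm, mul_zero, ite_self, add_zero]
    ext r c
    simp only [mul_u, col_k, transvection_mul_apply, mul_transvection_apply, hcol,
      Finset.mem_compl, Finset.mem_singleton]
    rcases eq_or_ne r k with rfl | hr
    · rcases eq_or_ne c r with rfl | hc
      · simp [h, hcol, one_apply_ne h.symm]
      · rcases eq_or_ne c i with rfl | hci
        · simp only [one_apply_eq, if_true, hc, not_false_eq_true]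
          ring
        · simp [hc, hci, one_apply_ne hci.symm]
    · simp [hr, one_apply_ne hr]
  calc (g * 𝐞 h a : SpecialLinearGroup ι R ⧸ Q)
      = 𝐞 h a * g * u := congrArg ((↑) : _ → SpecialLinearGroup ι R ⧸ Q) mul_transvection
    _ = 𝐞 h a * g := by rw [(QuotientGroup.eq_one_iff u).2 hu, mul_one]

end CommRing

section Euclidean

variable [EuclideanDomain R] {I : Ideal R} {Q : Subgroup (SpecialLinearGroup ι R)} [Q.Normal]

lemma mk_mem_center_of_mem_blockSubgroup (hQ : ∀ ⦃i j⦄ (h : i ≠ j), ∀ a ∈ I, 𝐞 h a ∈ Q)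
    {g : SpecialLinearGroup ι R} (hg : g ∈ principalCongruenceSubgroup ι I) {k : ι}
    (hgk : g ∈ blockSubgroup R {k}ᶜ) :
    (g : SpecialLinearGroup ι R ⧸ Q) ∈ Subgroup.center (SpecialLinearGroup ι R ⧸ Q) := by
  have centralizer_eq_top : (Subgroup.centralizer {(g : SpecialLinearGroup ι R ⧸ Q)}).comap
      (QuotientGroup.mk' Q) = ⊤ :=
    eq_top_of_transvection_mem k
      (fun i h a ↦ Subgroup.mem_centralizer_singleton_iff.2
        (commute_mk_transvection_col hQ hg hgk h a).symm)
      (fun i h a ↦ Subgroup.mem_centralizer_singleton_iff.2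
        (commute_mk_transvection_row hQ hg hgk h a).symm)
  refine Subgroup.mem_center_iff.2 fun y ↦ ?_
  obtain ⟨x, rfl⟩ := QuotientGroup.mk'_surjective Q y
  exact Subgroup.mem_centralizer_singleton_iff.1
    (Subgroup.mem_comap.1 (centralizer_eq_top ▸ Subgroup.mem_top x))

lemma mk_mem_center_of_apply_self_eq_one (hQ : ∀ ⦃i j⦄ (h : i ≠ j), ∀ a ∈ I, 𝐞 h a ∈ Q)
    {g : SpecialLinearGroup ι R} (hg : g ∈ principalCongruenceSubgroup ι I) {k : ι}
    (hgk : g k k = 1) :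
    (g : SpecialLinearGroup ι R ⧸ Q) ∈ Subgroup.center (SpecialLinearGroup ι R ⧸ Q) := by
  have hT {x : SpecialLinearGroup ι R} (hx : x ∈ principalCongruenceSubgroup ι I) {i j : ι}
      (h : i ≠ j) : 𝐞 h (-x i j) ∈ Q ⊓ principalCongruenceSubgroup ι I :=
    have := I.neg_mem (apply_mem_of_mem_principalCongruenceSubgroup hx h)
    ⟨hQ h _ this, transvection_mem_principalCongruenceSubgroup h this⟩
  obtain ⟨u, ⟨huQ, huI⟩, mul_u⟩ := exists_mul_eq_add_row (t := {k}ᶜ) (k := k) (by simp)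
    (c := fun c ↦ -g k c) fun c _ h ↦ hT hg h
  have row (j : ι) : (g * u) k j = (1 : Matrix ι ι R) k j := by
    rw [mul_u, hgk]
    rcases eq_or_ne j k with rfl | hj
    · simp [hgk]
    · simp [hj, one_apply_ne hj.symm]
  obtain ⟨v, ⟨hvQ, hvI⟩, mul_v⟩ := exists_mul_eq_add_col (t := {k}ᶜ) (k := k) (by simp)
    (c := fun r ↦ -(g * u) r k) fun r _ h ↦ hT (mul_mem hg huI) h
  have hblock : v * (g * u) ∈ blockSubgroup R {k}ᶜ := by
    refine mem_blockSubgroup_compl_singleton_iff.2 ⟨fun j ↦ by simp [mul_v, row], fun i ↦ ?_⟩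
    rw [mul_v, row]
    rcases eq_or_ne i k with rfl | hi
    · simp [row]
    · simp [hi, one_apply_ne hi]
  have mk_eq : ((v * (g * u) : SpecialLinearGroup ι R) : SpecialLinearGroup ι R ⧸ Q) = g := by
    rw [QuotientGroup.mk_mul, QuotientGroup.mk_mul, (QuotientGroup.eq_one_iff v).2 hvQ,
      (QuotientGroup.eq_one_iff u).2 huQ, one_mul, mul_one]
  exact mk_eq ▸ mk_mem_center_of_mem_blockSubgroup hQ (mul_mem hvI (mul_mem hg huI)) hblock

lemma mk_mem_center_of_row (hQ : ∀ ⦃i j⦄ (h : i ≠ j), ∀ a ∈ I, 𝐞 h a ∈ Q)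
    {g : SpecialLinearGroup ι R} (hg : g ∈ principalCongruenceSubgroup ι I) {k i l : ι}
    (hki : k ≠ i) (hkl : k ≠ l) (hil : i ≠ l) (hrow : ∀ j, j ≠ k → j ≠ i → g k j = 0) :
    (g : SpecialLinearGroup ι R ⧸ Q) ∈ Subgroup.center (SpecialLinearGroup ι R ⧸ Q) := by
  have bezout : g k k * g⁻¹ k k + g k i * g⁻¹ i k = 1 := by
    rw [← Finset.sum_pair hki (f := fun j ↦ g k j * g⁻¹ j k)]
    refine (Finset.sum_subset (Finset.subset_univ _) fun j _ hj ↦ ?_).trans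
      (sum_mul_inv_apply g k)
    simp only [Finset.mem_insert, Finset.mem_singleton, not_or] at hj
    rw [hrow j hj.1 hj.2, zero_mul]
  obtain ⟨q, hq, hgkk⟩ : ∃ q ∈ I, g k k = q + 1 :=
    ⟨_, one_apply_eq (α := R) k ▸ mem_principalCongruenceSubgroup_iff.1 hg k k, by simp⟩
  -- Conjugating `g * 𝐞 hkl q` by `x` subtracts `q * (g k k * g⁻¹ k k + g k i * g⁻¹ i k) = q` from
  -- its `k`-th diagonal entry.
  let x : SpecialLinearGroup ι R := 𝐞 hki.symm (-q * g⁻¹ i k) * 𝐞 hkl.symm (-g⁻¹ k k)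
  have apply_self : (x⁻¹ * (g * 𝐞 hkl q) * x) k k = 1 := by
    simp only [x, _root_.mul_inv_rev, SpecialLinearGroup.transvection_inv, mul_assoc,
      transvection_mul_apply, hki, hkl, if_false, add_zero]
    simp only [← mul_assoc, mul_transvection_apply, hkl, hkl.symm, hil,
      if_true, if_false, add_zero, hrow l hkl.symm hil.symm]
    linear_combination hgkk - q * bezout
  rw [← QuotientGroup.mk_mul_of_mem g (hQ hkl q hq), ← inv_mul_mul_mem_center_iff (x := ↑x)]
  exact mk_mem_center_of_apply_self_eq_one hQ (inv_mul_mul_mem_principalCongruenceSubgroup <|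
    mul_mem hg (transvection_mem_principalCongruenceSubgroup hkl hq)) apply_self

theorem map_principalCongruenceSubgroup_le_center (hι : 3 ≤ Fintype.card ι)
    (hQ : ∀ ⦃i j⦄ (h : i ≠ j), ∀ a ∈ I, 𝐞 h a ∈ Q) :
    (principalCongruenceSubgroup ι I).map (QuotientGroup.mk' Q) ≤
      Subgroup.center (SpecialLinearGroup ι R ⧸ Q) := by
  obtain ⟨k, i, l, hki, hkl, hil⟩ := Fintype.two_lt_card_iff.1 hι
  rintro _ ⟨g, hg, rfl⟩
  obtain ⟨x, hx, hgx⟩ := exists_mul_apply_eq_zero_of_mem (k := i) (t := {k, i}ᶜ) (by simp) k g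
  rw [← inv_mul_mul_mem_center_iff (x := QuotientGroup.mk' Q x)]
  refine mk_mem_center_of_row (g := x⁻¹ * g * x) hQ
    (inv_mul_mul_mem_principalCongruenceSubgroup hg) hki hkl hil fun j hjk hji ↦ ?_
  have hx' : x⁻¹ ∈ blockSubgroup R {k}ᶜ :=
    inv_mem (elementarySubgroup_le_blockSubgroup _ (elementarySubgroup_mono (by simp [hki]) hx))
  rw [mul_assoc, mul_apply_of_row_eq_one (mem_blockSubgroup_compl_singleton_iff.1 hx').1,
    hgx j (by simp [hjk, hji])]

theorem finiteIndex_of_transvection_mem (hι : 3 ≤ Fintype.card ι) [Finite (R ⧸ I)]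
    (hQ : ∀ ⦃i j⦄ (h : i ≠ j), ∀ a ∈ I, 𝐞 h a ∈ Q) : Q.FiniteIndex := by
  have := isPerfect_specialLinearGroup (R := R) hι
  have : ((principalCongruenceSubgroup ι I).map (QuotientGroup.mk' Q)).FiniteIndex :=
    ⟨ne_zero_of_dvd_ne_zero Subgroup.FiniteIndex.index_ne_zero
      (Subgroup.index_map_dvd _ (QuotientGroup.mk'_surjective Q))⟩
  have := Subgroup.finiteIndex_of_le (map_principalCongruenceSubgroup_le_center hι hQ)
  have := finite_of_isPerfect_of_finiteIndex_center (G := SpecialLinearGroup ι R ⧸ Q)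
  exact Subgroup.finiteIndex_of_finite_quotient

end Euclidean
end Congruence

section Superrigidity

open Module

variable {ι R K V : Type*} [Fintype ι] [DecidableEq ι] [Field K] [IsAlgClosed K]
  [AddCommGroup V] [Module K V] [FiniteDimensional K V]

lemma heisenbergRelations_transvection [CommRing R] {i l : ι} (hil : i ≠ l) (a b : R) :
    HeisenbergRelations (Matrix.J {j // j ≠ i ∧ j ≠ l} ℤ)
      (Sum.elim (fun j ↦ 𝐞 j.2.2 b) (fun j ↦ 𝐞 j.2.1.symm a)) (𝐞 hil (a * b)) := by
  have commutator_eq (j j' : {j // j ≠ i ∧ j ≠ l}) :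
      ⁅𝐞 j.2.1.symm a, 𝐞 j'.2.2 b⁆ = 𝐞 hil (a * b) ^ (1 : Matrix _ _ ℤ) j j' := by
    rcases eq_or_ne j j' with rfl | h
    · rw [one_apply_eq, zpow_one, commutator_transvection _ _ hil]
    · rw [one_apply_ne h, zpow_zero, commutatorElement_eq_one_iff_commute]
      exact commute_transvection _ _ (Subtype.coe_ne_coe.2 h) hil a b
  refine ⟨?_, ?_⟩
  · rintro (j | j)
    · exact commute_transvection hil j.2.2 j.2.2.symm hil _ _
    · exact commute_transvection hil j.2.1.symm hil.symm j.2.1.symm _ _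
  · rintro (j | j) (j' | j')
    · exact commutatorElement_eq_one_iff_commute.2
        (commute_transvection j.2.2 j'.2.2 j'.2.2.symm j.2.2 b b)
    · rw [← commutatorElement_inv]
      refine (congrArg _ (commutator_eq j' j)).trans ?_
      rw [← _root_.zpow_neg, J, fromBlocks_apply₁₂, neg_apply, ← transpose_apply 1, transpose_one]
    · exact commutator_eq j j'
    · exact commutatorElement_eq_one_iff_commute.2
        (commute_transvection j.2.1.symm j'.2.1.symm j.2.1 j'.2.1.symm a a)

lemma card_subtype_ne_and_ne_add_two {i l : ι} (hil : i ≠ l) :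
    Fintype.card {j // j ≠ i ∧ j ≠ l} + 2 = Fintype.card ι := by
  rw [← Finset.card_pair hil, Fintype.card_of_subtype {i, l}ᶜ (by simp), Finset.card_compl_add_card]

theorem transvection_mem_map_ker_of_finrank_lt [CommRing R] (hι : 3 ≤ Fintype.card ι)
    (hV : finrank K V < Fintype.card ι) {N : Subgroup (SpecialLinearGroup ι R)} {k : R}
    (hN : ∀ ⦃i j⦄ (h : i ≠ j) a, 𝐞 h (k * a) ∈ N) (ρ : N →* LinearMap.GeneralLinearGroup K V)
    {i l : ι} (hil : i ≠ l) (a : R) :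
    𝐞 hil ((finrank K V).factorial * k ^ 2 * a) ∈ ρ.ker.map N.subtype := by
  have relations (b : R) := ((heisenbergRelations_transvection hil k (k * b)).subgroup
    (Sum.rec (fun j ↦ hN j.2.2 b) fun j ↦ by simpa using hN j.2.1.symm 1) (hN hil (k * b))).map ρ
  have card_eq := card_subtype_ne_and_ne_add_two hil
  obtain ⟨j⟩ : Nonempty {j // j ≠ i ∧ j ≠ l} := Fintype.card_pos_iff.1 (by lia)
  have center_eq : (⟨𝐞 hil (k * (k * a)), hN hil _⟩ ^ (finrank K V).factorial : N) =
      ⟨𝐞 hil (k * (k * ((finrank K V).factorial * a))), hN hil _⟩ := by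
    refine Subtype.ext ((transvection_pow hil _ _).trans ?_)
    simp only [mul_left_comm k]
  refine ⟨_, (relations ((finrank K V).factorial * a)).center_eq_one ?_ (fun μ hμ ↦ ?_) ?_, ?_⟩
  · exact ne_of_eq_of_ne (congrArg det (map_J _ (Int.castRingHom K))) (isUnit_det_J _ K).ne_zero
  · rw [← center_eq, map_pow] at hμ
    exact (relations a).eigenvalue_center_pow_factorial_eq_one (s := .inr j) (t := .inl j)
      (one_apply_eq j) hμ
  · rw [Fintype.card_sum]
    lia
  · simp only [Subgroup.subtype_apply, pow_two, mul_assoc, mul_left_comm k]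

theorem finiteIndex_ker_of_finrank_lt [EuclideanDomain R] [CharZero R] [Ring.HasFiniteQuotients R]
    (hι : 3 ≤ Fintype.card ι) (hV : finrank K V < Fintype.card ι)
    {H : Subgroup (SpecialLinearGroup ι R)} [H.FiniteIndex]
    (φ : H →* LinearMap.GeneralLinearGroup K V) : φ.ker.FiniteIndex := by
  let N := H.normalCore
  let m : R := (finrank K V).factorial * (N.index : R) ^ 2
  have hm : m ≠ 0 := mul_ne_zero (Nat.cast_ne_zero.2 (Nat.factorial_ne_zero _))
    (pow_ne_zero _ (Nat.cast_ne_zero.2 Subgroup.FiniteIndex.index_ne_zero))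
  have : Finite (R ⧸ Ideal.span {m}) :=
    Ring.HasFiniteQuotients.finiteQuotient (mt Ideal.span_singleton_eq_bot.1 hm)
  have hN ⦃i j : ι⦄ (h : i ≠ j) (a : R) : 𝐞 h (N.index * a) ∈ N :=
    transvection_pow h a N.index ▸ N.pow_index_mem _
  let conj (g : SpecialLinearGroup ι R) : N →* H :=
    (Subgroup.inclusion H.normalCore_le).comp (MulAut.conjNormal g).toMonoidHom
  have transvection_mem ⦃i j : ι⦄ (h : i ≠ j) (a : R) (ha : a ∈ Ideal.span {m}) :
      𝐞 h a ∈ (φ.ker.map H.subtype).normalCore := by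
    obtain ⟨b, rfl⟩ := Ideal.mem_span_singleton.1 ha
    intro g
    obtain ⟨x, hx, x_eq⟩ := transvection_mem_map_ker_of_finrank_lt hι hV hN (φ.comp (conj g)) h b
    exact ⟨conj g x, hx, congrArg (g * · * g⁻¹) x_eq⟩
  have := finiteIndex_of_transvection_mem hι transvection_mem
  have : (φ.ker.map H.subtype).FiniteIndex := Subgroup.finiteIndex_of_le (Subgroup.normalCore_le _)
  exact ⟨left_ne_zero_of_mul (Subgroup.index_map_subtype φ.ker ▸ this.index_ne_zero)⟩

end Superrigidity

end SpecialLinearSuperrigidity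

theorem stmt_13_general {ι κ R S : Type*} [Fintype ι] [DecidableEq ι] [Fintype κ] [DecidableEq κ]
    [EuclideanDomain R] [CharZero R] [Ring.HasFiniteQuotients R] [CommRing S] [IsDomain S]
    (hι : 3 ≤ Fintype.card ι) (hκ : Fintype.card κ < Fintype.card ι)
    (H : Subgroup (SpecialLinearGroup ι R)) (hH : H.FiniteIndex) (φ : H →* GL κ S) :
    (Set.range φ).Finite := by
  let K := FractionRing S
  let L := AlgebraicClosure K
  let f : S →+* L := (algebraMap K L).comp (algebraMap S K)
  have hf : Function.Injective f := (algebraMap K L).injective.comp (IsFractionRing.injective S K)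
  let ψ : GL κ S →* LinearMap.GeneralLinearGroup L (κ → L) :=
    GeneralLinearGroup.toLin.toMonoidHom.comp (GeneralLinearGroup.map f)
  have hψ : Function.Injective ψ :=
    GeneralLinearGroup.toLin.injective.comp (Units.map_injective (Matrix.map_injective hf))
  have := SpecialLinearSuperrigidity.finiteIndex_ker_of_finrank_lt hι
    (by rwa [Module.finrank_fintype_fun_eq_card]) (ψ.comp φ)
  rw [MonoidHom.ker_comp_of_injective φ ψ hψ] at this
  exact Nat.finite_of_card_ne_zero (Subgroup.index_ker φ ▸ this.index_ne_zero)

/-- For `n ≥ 5` and any finite-index subgroup `H` of `SL(n, ℤ)`, every homomorphism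
`H → GL(4, ℝ)` has finite image. -/
theorem stmt_13 (n : ℕ) (hn : 5 ≤ n) (H : Subgroup (SpecialLinearGroup (Fin n) ℤ))
    (hH : H.FiniteIndex) (φ : H →* GL (Fin 4) ℝ) :
    (Set.range φ).Finite :=
  stmt_13_general (by simp; lia) (by simp; lia) H hH φ
end
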